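/- arXiv:1911.12000 — 14 statements merged into one kernel-verified Lean document; each statement's English description precedes it below -/
import Mathlib

section
/- Let R be a nonzero monomial Rota–Baxter operator of weight 0 on k₀[x]. Then there exist a positive integer m, nonnegative integers p_1, …, p_m, and scalars q_1, …, q_m ∈ k such that for each b one has p_b = 0 if and only if q_b = 0, and for all integers a ≥ 0 and all b with 1 ≤ b ≤ m: R(x^{ma+b}) = 0 if q_b = 0, and R(x^{ma+b}) = (q_b / (m(a + p_b))) · x^{m(a+p_b)} if q_b ≠ 0. -/
open Polynomial

/-!
Write `R (x ^ n) = α n x ^ (t n)`. Comparing coefficients, the Rota–Baxter identity for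
`x ^ n` and `x ^ k` becomes the relation `RBData` between monomials. Let `S` be the set of
`n ≥ 1` with `α n ≠ 0`.

* The identity for `n` and `n + j t n` gives, by induction on `j`, that `n + j t n ∈ S`,
  `t (n + j t n) = (j + 1) t n` and `α (n + j t n) = α n / (j + 1)` (`RBData.iterate`). In
  particular `α n * t n` does not change under `n ↦ n + j t n`.
* If `k ∉ S` and `n ∈ S`, then `k + t n ∉ S`. If `k ∈ S` but `k + t n ∉ S`, adding `t n`
  repeatedly gives `k + t k t n ∉ S`, contrary to the first point. So `S` is invariant under
  translation by `t n` (`RBData.ne_zero_add`), and then all three monomials of the identity are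
  nonzero, which forces `t (k + t n) = t k + t n` (`RBData.t_add`).
* With `a = t k`, `d = t n`, one has `k + d + (a - 1)(a + d) = k + (a + d - 1) a`, and both sides
  arise from the moves of the first point, started at `k + d` and `k`. Hence `α * t` takes the
  same value at `k + d` and `k` (`RBData.c_add`).

Therefore every `t n` with `n ∈ S` is a period (`IsPeriod`). Periods are closed under addition and
subtraction, so the least positive period `m` divides all of them; the formula follows with
`q b = α b * t b` and `p b = t b / m`.
-/

/-- The Rota–Baxter identity of weight 0 for the operator `x ^ n ↦ α n x ^ (t n)` on the monomials
of positive degree: the identity for the pair `x ^ n`, `x ^ k`, read off at the coefficient of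
`x ^ e`. -/
def RBData {K : Type*} [Field K] (α : ℕ → K) (t : ℕ → ℕ) : Prop :=
  ∀ n k : ℕ, 1 ≤ n → 1 ≤ k → ∀ e : ℕ,
    (if t n + t k = e then α n * α k else 0) =
      (if t (k + t n) = e then α n * α (k + t n) else 0) +
        (if t (n + t k) = e then α k * α (n + t k) else 0)

/-- `d` is a period if translation by `d` preserves the support of `α` on positive integers,
shifts `t` by `d` there, and leaves `α * t` unchanged there. The value `d = 0` is allowed. -/
def IsPeriod {K : Type*} [Field K] (α : ℕ → K) (t : ℕ → ℕ) (d : ℕ) : Prop :=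
  ∀ n : ℕ, 1 ≤ n → (α n = 0 ↔ α (n + d) = 0) ∧
    (α n ≠ 0 → t (n + d) = t n + d ∧ α (n + d) * (t (n + d) : K) = α n * (t n : K))

section Data

variable {K : Type*} [Field K] {α : ℕ → K} {t : ℕ → ℕ}

lemma RBData.iterate [CharZero K] (H : RBData α t) {n : ℕ} (hn : 1 ≤ n) (ha : α n ≠ 0) (j : ℕ) :
    α (n + j * t n) * ((j : K) + 1) = α n ∧ t (n + j * t n) = (j + 1) * t n := by
  induction j with
  | zero => simp
  | succ j ih =>
    obtain ⟨h1, h2⟩ := ih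
    have hb : α (n + j * t n) ≠ 0 := by
      intro h; rw [h, zero_mul] at h1; exact ha h1.symm
    have e1 : n + j * t n + t n = n + (j + 1) * t n := by ring
    -- Both terms on the right-hand side of the identity live at the same index.
    have key := H n (n + j * t n) hn (by omega) (t n + t (n + j * t n))
    rw [h2, e1, if_pos rfl] at key
    by_cases ht : t (n + (j + 1) * t n) = t n + (j + 1) * t n
    · rw [if_pos ht, if_pos ht] at key
      refine ⟨?_, by rw [ht]; ring⟩
      have : α (n + j * t n) * (α (n + (j + 1) * t n) * (((j + 1 : ℕ) : K) + 1) - α n) = 0 := by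
        push_cast
        linear_combination (-1 : K) * key + (α (n + (j + 1) * t n)) * h1
      exact sub_eq_zero.mp ((mul_eq_zero.mp this).resolve_left hb)
    · rw [if_neg ht, if_neg ht] at key
      simp [ha, hb] at key

lemma RBData.c_iterate [CharZero K] (H : RBData α t) {n : ℕ} (hn : 1 ≤ n) (ha : α n ≠ 0) (j : ℕ) :
    α (n + j * t n) * (t (n + j * t n) : K) = α n * (t n : K) := by
  obtain ⟨h1, h2⟩ := H.iterate hn ha j
  rw [h2]; push_cast
  linear_combination (t n : K) * h1

lemma RBData.eq_zero_add (H : RBData α t) {n k : ℕ} (hn : 1 ≤ n) (hk : 1 ≤ k)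
    (ha : α n ≠ 0) (h0 : α k = 0) : α (k + t n) = 0 := by
  have key := H n k hn hk (t (k + t n))
  simpa [h0, ha] using key

lemma RBData.eq_zero_add_mul (H : RBData α t) {n k : ℕ} (hn : 1 ≤ n) (hk : 1 ≤ k)
    (ha : α n ≠ 0) (h0 : α k = 0) (j : ℕ) : α (k + j * t n) = 0 := by
  induction j with
  | zero => simpa using h0
  | succ j ih =>
    have := H.eq_zero_add hn (by omega : 1 ≤ k + j * t n) ha ih
    rwa [show k + j * t n + t n = k + (j + 1) * t n by ring] at this

lemma RBData.ne_zero_add [CharZero K] (H : RBData α t) (ht : ∀ n, 1 ≤ t n) {n k : ℕ}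
    (hn : 1 ≤ n) (hk : 1 ≤ k) (ha : α n ≠ 0) (hb : α k ≠ 0) : α (k + t n) ≠ 0 := by
  intro h0
  have h1 := H.eq_zero_add_mul hn (by omega) ha h0 (t k - 1)
  have e : k + t n + (t k - 1) * t n = k + t n * t k := by
    obtain ⟨c, hc⟩ := Nat.exists_eq_add_of_le (ht k)
    rw [hc, Nat.add_sub_cancel_left]; ring
  rw [e] at h1
  have h2 := (H.iterate hk hb (t n)).1
  rw [h1, zero_mul] at h2
  exact hb h2.symm

lemma RBData.t_add [CharZero K] (H : RBData α t) (ht : ∀ n, 1 ≤ t n) {n k : ℕ}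
    (hn : 1 ≤ n) (hk : 1 ≤ k) (ha : α n ≠ 0) (hb : α k ≠ 0) : t (k + t n) = t k + t n := by
  have h1 := H.ne_zero_add ht hn hk ha hb
  have h2 := H.ne_zero_add ht hk hn hb ha
  by_contra hne
  -- The monomial of degree `t (k + t n)` must cancel against the other one on the right, and then
  -- nothing is left in degree `t n + t k`.
  have k1 := H n k hn hk (t (k + t n))
  have k2 := H n k hn hk (t n + t k)
  have hne' : ¬ t n + t k = t (k + t n) := by omega
  have hne'' : ¬ t (k + t n) = t n + t k := by omega
  rw [if_neg hne', if_pos rfl] at k1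
  rw [if_pos rfl, if_neg hne''] at k2
  by_cases h : t (n + t k) = t (k + t n)
  · rw [if_neg (by omega)] at k2
    simp [ha, hb] at k2
  · rw [if_neg h] at k1
    simp [ha, h1] at k1

lemma RBData.c_add [CharZero K] (H : RBData α t) (ht : ∀ n, 1 ≤ t n) {n k : ℕ}
    (hn : 1 ≤ n) (hk : 1 ≤ k) (ha : α n ≠ 0) (hb : α k ≠ 0) :
    α (k + t n) * (t (k + t n) : K) = α k * (t k : K) := by
  have h1 := H.c_iterate (by omega) (H.ne_zero_add ht hn hk ha hb) (t k - 1)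
  have h2 := H.c_iterate hk hb (t k + t n - 1)
  have e : k + t n + (t k - 1) * t (k + t n) = k + (t k + t n - 1) * t k := by
    rw [H.t_add ht hn hk ha hb]
    obtain ⟨c, hc⟩ := Nat.exists_eq_add_of_le (ht k)
    rw [hc, Nat.add_sub_cancel_left, show 1 + c + t n - 1 = c + t n by omega]; ring
  rw [← h1, ← h2, e]

lemma RBData.isPeriod [CharZero K] (H : RBData α t) (ht : ∀ n, 1 ≤ t n) {n : ℕ}
    (hn : 1 ≤ n) (ha : α n ≠ 0) : IsPeriod α t (t n) := fun _ hk =>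
  ⟨⟨H.eq_zero_add hn hk ha, fun h => by
      by_contra hb
      exact H.ne_zero_add ht hn hk ha hb h⟩,
    fun hb => ⟨H.t_add ht hn hk ha hb, H.c_add ht hn hk ha hb⟩⟩

lemma IsPeriod.add {d e : ℕ} (hd : IsPeriod α t d) (he : IsPeriod α t e) :
    IsPeriod α t (d + e) := by
  intro n hn
  obtain ⟨i1, f1⟩ := hd n hn
  obtain ⟨i2, f2⟩ := he (n + d) (by omega)
  rw [← add_assoc]
  refine ⟨i1.trans i2, fun h => ?_⟩
  obtain ⟨a1, b1⟩ := f1 h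
  obtain ⟨a2, b2⟩ := f2 (fun h' => h (i1.mpr h'))
  exact ⟨by omega, b2.trans b1⟩

lemma IsPeriod.mul_right {d : ℕ} (hd : IsPeriod α t d) (j : ℕ) : IsPeriod α t (d * j) := by
  induction j with
  | zero => intro n _; simp
  | succ j ih => exact ih.add hd

lemma IsPeriod.of_add {d e : ℕ} (hd : IsPeriod α t d) (hde : IsPeriod α t (e + d)) :
    IsPeriod α t e := by
  intro n hn
  obtain ⟨i1, f1⟩ := hde n hn
  obtain ⟨i2, f2⟩ := hd (n + e) (by omega)
  rw [← add_assoc] at i1 f1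
  have i3 := i1.trans i2.symm
  refine ⟨i3, fun h => ?_⟩
  obtain ⟨a1, b1⟩ := f1 h
  obtain ⟨a2, b2⟩ := f2 (fun h' => h (i3.mpr h'))
  exact ⟨by omega, b2.symm.trans b1⟩

lemma exists_minimal_period {d₀ : ℕ} (h₀ : 0 < d₀) (hd₀ : IsPeriod α t d₀) :
    ∃ m, 0 < m ∧ IsPeriod α t m ∧ ∀ d, IsPeriod α t d → m ∣ d := by
  classical
  have hex : ∃ d, 0 < d ∧ IsPeriod α t d := ⟨d₀, h₀, hd₀⟩
  obtain ⟨hpos, hper⟩ := Nat.find_spec hex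
  refine ⟨Nat.find hex, hpos, hper, fun d hd => ?_⟩
  have hr : IsPeriod α t (d % Nat.find hex) := by
    refine (hper.mul_right (d / Nat.find hex)).of_add ?_
    rwa [Nat.mod_add_div]
  by_contra hnd
  exact Nat.find_min hex (Nat.mod_lt d hpos)
    ⟨Nat.pos_of_ne_zero fun h => hnd (Nat.dvd_of_mod_eq_zero h), hr⟩

end Data

/- STATEMENT 0.
`k₀[x]`, the free commutative non-unital algebra generated by `x` over a field `K` of
characteristic zero, is encoded as the set of polynomials `p : K[X]` with `p.coeff 0 = 0`
inside `Polynomial K`.  An operator on `k₀[x]` is a linear map `R` on `Polynomial K` that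
maps this subspace to itself (`hmap`); the Rota–Baxter identity of weight 0 (`hRB`) and the
monomiality (`hmono`, with exponents `≥ 1`) and nonvanishing (`hne`) conditions are imposed
on this subspace.  The conclusion is the classification formula of Theorem 1. -/
theorem monomial_RB_weight_zero_on_k0x
    {K : Type*} [Field K] [CharZero K]
    (R : Polynomial K →ₗ[K] Polynomial K)
    (hmap : ∀ p : Polynomial K, p.coeff 0 = 0 → (R p).coeff 0 = 0)
    (hRB : ∀ u v : Polynomial K, u.coeff 0 = 0 → v.coeff 0 = 0 →
      R u * R v = R (R u * v + u * R v))
    (hmono : ∀ n : ℕ, 1 ≤ n → ∃ (α : K) (t : ℕ), 1 ≤ t ∧ R (X ^ n) = α • X ^ t)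
    (hne : ∃ p : Polynomial K, p.coeff 0 = 0 ∧ R p ≠ 0) :
    ∃ m : ℕ, 0 < m ∧ ∃ (p : ℕ → ℕ) (q : ℕ → K),
      ∀ b : ℕ, 1 ≤ b → b ≤ m →
        (p b = 0 ↔ q b = 0) ∧
        ∀ a : ℕ,
          (q b = 0 → R (X ^ (m * a + b)) = 0) ∧
          (q b ≠ 0 →
            R (X ^ (m * a + b)) =
              (q b / ((m * (a + p b) : ℕ) : K)) • X ^ (m * (a + p b))) := by
  have hm' : ∀ n : ℕ, ∃ (α : K) (t : ℕ), 1 ≤ t ∧ (1 ≤ n → R (X ^ n) = α • X ^ t) := by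
    intro n
    by_cases hn : 1 ≤ n
    · obtain ⟨α, t, h1, h2⟩ := hmono n hn
      exact ⟨α, t, h1, fun _ => h2⟩
    · exact ⟨0, 1, le_rfl, fun h => absurd h hn⟩
  choose α t ht hR using hm'
  have H : RBData α t := by
    intro n k hn hk e
    have key := hRB (X ^ n) (X ^ k) (by simp [coeff_X_pow]; omega) (by simp [coeff_X_pow]; omega)
    rw [hR n hn, hR k hk, smul_mul_assoc, mul_smul_comm, ← pow_add, smul_mul_assoc,
      mul_smul_comm, ← pow_add, ← pow_add, map_add, map_smul, map_smul,
      add_comm (t n) k, hR _ (by omega), hR _ (by omega)] at key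
    have := congrArg (fun p => coeff p e) key
    simpa [coeff_X_pow, eq_comm (a := e)] using this
  -- A polynomial without constant term is a combination of `X ^ n`, `n ≥ 1`.
  have hex : ∃ n, 1 ≤ n ∧ α n ≠ 0 := by
    by_contra! hall
    obtain ⟨p, hp0, hp⟩ := hne
    apply hp
    rw [p.as_sum_range_C_mul_X_pow, map_sum]
    refine Finset.sum_eq_zero fun i _ => ?_
    rw [← smul_eq_C_mul, map_smul]
    rcases Nat.eq_zero_or_pos i with rfl | hi
    · rw [hp0, zero_smul]
    · rw [hR i hi, hall i hi, zero_smul, smul_zero]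
  obtain ⟨n₀, hn₀, ha₀⟩ := hex
  obtain ⟨m, hm, hper, hdvd⟩ := exists_minimal_period (ht n₀) (H.isPeriod ht hn₀ ha₀)
  have htK : ∀ n, (t n : K) ≠ 0 := fun n => by
    have := ht n
    exact_mod_cast (by omega : t n ≠ 0)
  classical
  refine ⟨m, hm, fun b => if α b = 0 then 0 else t b / m, fun b => α b * t b, ?_⟩
  intro b hb _
  by_cases h0 : α b = 0
  · refine ⟨by simp [h0], fun a => ⟨fun _ => ?_, fun h => absurd (by simp [h0]) h⟩⟩
    rw [add_comm, hR _ (by omega), ((hper.mul_right a) b hb).1.mp h0, zero_smul]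
  · obtain ⟨s, hs⟩ := hdvd _ (H.isPeriod ht hb h0)
    have hdiv : t b / m = s := by rw [hs, Nat.mul_div_cancel_left _ hm]
    have hs0 : s ≠ 0 := by
      rintro rfl
      have := ht b
      omega
    refine ⟨by simp [h0, hdiv, hs0, htK b], fun a => ⟨fun h => absurd h (mul_ne_zero h0 (htK b)),
      fun _ => ?_⟩⟩
    obtain ⟨h1, h2⟩ := ((hper.mul_right a) b hb).2 h0
    have e : t (b + m * a) = m * (a + s) := by rw [h1, hs]; ring
    simp only [if_neg h0, hdiv]
    rw [add_comm (m * a) b, hR _ (by omega), ← h2, ← e, mul_div_cancel_right₀ _ (htK _)]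
end

section
/- Let R be a monomial Rota–Baxter operator of weight 1 on k₀[x]. Then there exists α ∈ k such that (α+1)^n ≠ α^n for all integers n ≥ 1 and R(x^n) = (α^n / ((α+1)^n − α^n)) · x^n for all n ≥ 1. -/
open Polynomial

/-!
Write `A` for the polynomials without constant term and `R(x^n) = c_n x^(τ n)`. For the product
`u ∗ v = R(u)v + uR(v) + uv` both `R` and `R + 1` are multiplicative maps `(A, ∗) → A`; hence
`ker R` is an ideal of `(R + 1)(A)` and `ker (R + 1)` is an ideal of `R(A)`. The work lies in
showing that `R` is diagonal.

Suppose `ker R` contains some `u ≠ 0` and `R(x^n) = β x^t` with `β ≠ 0`. Since `K[x]` is integral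
over `K[u]`, reducing an integral equation of `y = x^n + β x^t` modulo `u` gives a nonzero
polynomial `p` without constant term with `p(y) ∈ ker R`, and therefore `q = p(β x^t)` satisfies
`R q = -q`; the same holds for all `q x^(tj)`. The exponent map `τ` permutes the support of each of
these, and comparing the shifted supports forces `τ (ti) = ti` and `c_(ti) ≠ 0` for all large `i`
(`eventually_diagonal`).

If `R(x^N) = 0` for some `N`, then all powers of `x^N` lie in `ker R`, which contradicts
`eventually_diagonal` unless `R = 0` (`coeff_eq_zero_of_eq_zero`). If no `c_n` vanishes but
`t = τ n ≠ n`, the Rota–Baxter identity yields `τ (an + bt) = (a + b)t` whenever `a ≥ 1` and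
`a + b` is a power of two (`exponent_level`). In particular `x^(2n)` and `x^(n + t)` have
proportional images, so `ker R ≠ 0`, and the value of `τ` at `tn + (2^l - t)t` contradicts
`eventually_diagonal` (`exponent_eq_self`).

For a diagonal `R` the identity for `x^n` and `x` is the recursion
`(c_n + c_1 + 1) c_(n+1) = c_1 c_n`, which is solved in `diagonal_formula`.
-/

/-- The Rota–Baxter identity of weight `1` on polynomials without constant term. -/
def RBOne {K : Type*} [Field K] (R : Polynomial K →ₗ[K] Polynomial K) : Prop :=
  ∀ u v : Polynomial K, u.coeff 0 = 0 → v.coeff 0 = 0 →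
      R u * R v = R (R u * v + u * R v + u * v)

/-- The multipliers of `ker R`: all `v` with `w * v ∈ ker R` whenever `w ∈ ker R` has no constant
term. -/
def kerIdealizer {K : Type*} [Field K] (R : Polynomial K →ₗ[K] Polynomial K) :
    Subalgebra K (Polynomial K) where
  carrier := {v | ∀ w : Polynomial K, w.coeff 0 = 0 → R w = 0 → R (w * v) = 0}
  mul_mem' := by
    intro a b ha hb w hw0 hw
    rw [← mul_assoc]
    exact hb _ (by simp [mul_coeff_zero, hw0]) (ha w hw0 hw)
  add_mem' := by
    intro a b ha hb w hw0 hw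
    rw [mul_add, map_add, ha w hw0 hw, hb w hw0 hw, add_zero]
  algebraMap_mem' := by
    intro r w hw0 hw
    rw [mul_comm, ← Algebra.smul_def, map_smul, hw, smul_zero]

section
variable {K : Type*} [Field K] {R : Polynomial K →ₗ[K] Polynomial K}

/-- `(R + 1)(A)` multiplies `ker R` into itself. -/
lemma add_mem_kerIdealizer (hRB : RBOne R) {v : K[X]} (hv : v.coeff 0 = 0) :
    v + R v ∈ kerIdealizer R := by
  intro w hw0 hw
  have h := hRB w v hw0 hv
  rw [hw, zero_mul, zero_mul, zero_add] at h
  rw [h]; congr 1; ring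

lemma ker_mem_kerIdealizer (hRB : RBOne R) {v : K[X]} (hv : v.coeff 0 = 0) (h : R v = 0) :
    v ∈ kerIdealizer R := by
  simpa [h] using add_mem_kerIdealizer hRB hv

/-- `ker (R + 1)` is stable under multiplication by the image of `R`. -/
lemma neg_eigen_mul (hRB : RBOne R) {u v : K[X]} (hu : u.coeff 0 = 0) (hv : v.coeff 0 = 0)
    (h : R u = -u) : R (u * R v) = -(u * R v) := by
  have hid := hRB u v hu hv
  rw [h] at hid
  have e : -u * v + u * R v + u * v = u * R v := by ring
  rw [e] at hid
  rw [← hid]; ring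

/-- `R` and `R + 1` are simultaneously multiplicative for the product
`R(u)v + uR(v) + uv`, so polynomials in `R v` and in `v + R v` are images of one element `w`. -/
lemma exists_lift (hRB : RBOne R) {v : K[X]} (hv : v.coeff 0 = 0) (p : K[X]) :
    ∃ w : K[X], w.coeff 0 = 0 ∧ R w = aeval (R v) (X * p) ∧
      w + R w = aeval (v + R v) (X * p) := by
  induction p using Polynomial.induction_on with
  | C a =>
    refine ⟨a • v, by simp [hv], ?_, ?_⟩
    · rw [map_smul, map_mul, aeval_X, aeval_C, mul_comm, Algebra.smul_def]
    · rw [map_smul, map_mul, aeval_X, aeval_C, mul_comm, ← Algebra.smul_def, smul_add]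
  | add p q hp hq =>
    obtain ⟨w, h0, h1, h2⟩ := hp
    obtain ⟨w', h0', h1', h2'⟩ := hq
    refine ⟨w + w', by simp [h0, h0'], ?_, ?_⟩
    · rw [map_add, h1, h1', mul_add, map_add]
    · rw [mul_add, map_add (aeval _), ← h2, ← h2', map_add]; ring
  | monomial k a ih =>
    obtain ⟨w, h0, h1, h2⟩ := ih
    have hR := hRB w v h0 hv
    have e : (X * (C a * X ^ (k + 1)) : K[X]) = (X * (C a * X ^ k)) * X := by ring
    refine ⟨R w * v + w * R v + w * v, by simp [mul_coeff_zero, h0, hv], ?_, ?_⟩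
    · rw [← hR, e, map_mul, ← h1, aeval_X]
    · rw [← hR, e, map_mul, ← h2, aeval_X]; ring

/-- `K[X]` is integral over `K[u]` for nonconstant `u`. -/
lemma integral_aeval {u : K[X]} (hu : 0 < u.natDegree) (y : K[X]) :
    ((aeval u : K[X] →ₐ[K] K[X]) : K[X] →+* K[X]).IsIntegralElem y := by
  set φ : K[X] →+* K[X] := ((aeval u : K[X] →ₐ[K] K[X]) : K[X] →+* K[X]) with hφ
  have hC : ∀ a : K, φ (C a) = C a := by intro a; simp [hφ]
  have hCi : ∀ a : K, φ.IsIntegralElem (C a) := by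
    intro a; rw [← hC a]; exact φ.isIntegralElem_map
  have hX : φ.IsIntegralElem X := by
    have hu0 : u ≠ 0 := by rintro rfl; simp at hu
    have hlc : u.leadingCoeff ≠ 0 := leadingCoeff_ne_zero.mpr hu0
    -- `X` is a root of the monic polynomial `(u(T) - u) / leadingCoeff u` in `T`
    refine ⟨(u * C u.leadingCoeff⁻¹).map C - C (X * C u.leadingCoeff⁻¹), ?_, ?_⟩
    · have hm : (u * C u.leadingCoeff⁻¹).Monic := monic_mul_leadingCoeff_inv hu0
      refine (hm.map C).sub_of_left ?_
      refine lt_of_le_of_lt degree_C_le ?_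
      rw [degree_map, degree_mul_C (inv_ne_zero hlc)]
      exact natDegree_pos_iff_degree_pos.mp hu
    · have hcomp : φ.comp C = (C : K →+* K[X]) := by ext a : 1; exact hC a
      rw [eval₂_sub, eval₂_map, hcomp, eval₂_C, eval₂_mul, eval₂_C, map_mul, hC, eval₂_C_X]
      simp [hφ]
  induction y using Polynomial.induction_on with
  | C a => exact hCi a
  | add p q hp hq => exact hp.add φ hq
  | monomial k a ih =>
    rw [pow_succ, ← mul_assoc]; exact ih.mul φ hX

/-- If `ker R` contains some `u ≠ 0`, then it contains a nontrivial polynomial expression in any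
`y ∈ (R + 1)(A)`. -/
lemma exists_poly_mem_ker (hRB : RBOne R) {u v : K[X]} (hu0 : u.coeff 0 = 0) (hu : u ≠ 0)
    (hRu : R u = 0) (hv : v.coeff 0 = 0) :
    ∃ p : K[X], p ≠ 0 ∧ R (aeval (v + R v) (X * p)) = 0 := by
  have hdeg : 0 < u.natDegree := by
    by_contra h
    have h' : u.natDegree = 0 := by omega
    rw [eq_C_of_natDegree_eq_zero h', hu0] at hu
    simp at hu
  have hy := add_mem_kerIdealizer hRB hv
  have huB := ker_mem_kerIdealizer hRB hu0 hRu
  set y := v + R v with hydef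
  set φ : K[X] →+* K[X] := ((aeval u : K[X] →ₐ[K] K[X]) : K[X] →+* K[X]) with hφ
  obtain ⟨F, hF, hF0⟩ := integral_aeval hdeg y
  -- reduction of the coefficients modulo `u`
  have key : ∀ G : K[X][X], ∃ b ∈ kerIdealizer R,
      eval₂ φ y G = aeval y (G.map constantCoeff) + u * b := by
    intro G
    induction G using Polynomial.induction_on' with
    | add p q hp hq =>
      obtain ⟨b, hb, e⟩ := hp
      obtain ⟨b', hb', e'⟩ := hq
      refine ⟨b + b', add_mem hb hb', ?_⟩
      rw [eval₂_add, e, e', Polynomial.map_add, map_add]; ring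
    | monomial k g =>
      refine ⟨aeval u g.divX * y ^ k, mul_mem ?_ (pow_mem hy k), ?_⟩
      · exact Algebra.adjoin_le (Set.singleton_subset_iff.mpr huB) (aeval_mem_adjoin_singleton K u)
      · have hg : φ g = u * aeval u g.divX + C (g.coeff 0) := by
          have hdiv := congrArg φ (X_mul_divX_add g)
          rw [map_add, map_mul] at hdiv
          simpa [hφ] using hdiv.symm
        rw [eval₂_monomial, hg, map_monomial, aeval_monomial, constantCoeff_apply]
        simp only [algebraMap_eq]
        ring
  obtain ⟨b, hb, e⟩ := key F
  refine ⟨F.map constantCoeff, (hF.map _).ne_zero, ?_⟩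
  rw [hF0] at e
  have e2 : aeval y (X * F.map constantCoeff) = -(u * (b * y)) := by
    rw [map_mul, aeval_X]; linear_combination (-y) * e
  rw [e2, map_neg, mul_mem hb hy u hu0 hRu, neg_zero]

/-- The monomials of `R f` come from monomials of `f` that `R` does not kill. -/
lemma exists_of_coeff_ne_zero {c : ℕ → K} {τ : ℕ → ℕ}
    (h : ∀ n, 1 ≤ n → R (X ^ n) = c n • X ^ τ n) {f : K[X]} (hf : f.coeff 0 = 0) {m : ℕ}
    (hm : (R f).coeff m ≠ 0) : ∃ i ∈ f.support, c i ≠ 0 ∧ τ i = m := by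
  by_contra hcon
  push Not at hcon
  apply hm
  have e : f = ∑ i ∈ f.support, f.coeff i • (X ^ i : K[X]) := by
    conv_lhs => rw [f.as_sum_support]
    simp [smul_X_eq_monomial]
  rw [e, map_sum, finsetSum_coeff]
  refine Finset.sum_eq_zero fun i hi => ?_
  have hi1 : 1 ≤ i := by
    rcases Nat.eq_zero_or_pos i with rfl | h'
    · exact absurd hf (mem_support_iff.mp hi)
    · exact h'
  rw [map_smul, h i hi1, coeff_smul, coeff_smul, coeff_X_pow]
  by_cases hc : c i = 0
  · simp [hc]
  · have := hcon i hi hc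
    simp [Ne.symm this]

/-- On the support of a `-1`-eigenvector the exponent map is a permutation. -/
lemma mem_support_of_eigen {c : ℕ → K} {τ : ℕ → ℕ}
    (h : ∀ n, 1 ≤ n → R (X ^ n) = c n • X ^ τ n) {f : K[X]} (hf : f.coeff 0 = 0)
    (hR : R f = -f) {m : ℕ} (hm : m ∈ f.support) : c m ≠ 0 ∧ τ m ∈ f.support := by
  classical
  have hsub : f.support ⊆ (f.support.filter fun i => c i ≠ 0).image τ := by
    intro i hi
    have : (R f).coeff i ≠ 0 := by
      rw [hR, coeff_neg]; exact neg_ne_zero.mpr (mem_support_iff.mp hi)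
    obtain ⟨j, hj, hcj, e⟩ := exists_of_coeff_ne_zero h hf this
    exact Finset.mem_image.mpr ⟨j, Finset.mem_filter.mpr ⟨hj, hcj⟩, e⟩
  have hcard := Finset.card_le_card hsub
  have h1 : ((f.support.filter fun i => c i ≠ 0).image τ).card ≤
    (f.support.filter fun i => c i ≠ 0).card := Finset.card_image_le
  have hfil : (f.support.filter fun i => c i ≠ 0) = f.support :=
    Finset.eq_of_subset_of_card_le (Finset.filter_subset _ _) (hcard.trans h1)
  rw [hfil] at hsub h1
  have him := Finset.eq_of_subset_of_card_le hsub h1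
  refine ⟨?_, ?_⟩
  · rw [← hfil] at hm; exact (Finset.mem_filter.mp hm).2
  · rw [him]; exact Finset.mem_image_of_mem _ hm

/-- If `ker R ≠ 0` and `X ^ t` occurs as an image, then `R` is diagonal with nonzero eigenvalue on
all large powers of `X ^ t`. -/
lemma eventually_diagonal (hmap : ∀ p : K[X], p.coeff 0 = 0 → (R p).coeff 0 = 0)
    (hRB : RBOne R) {c : ℕ → K} {τ : ℕ → ℕ} (hτ : ∀ n, 1 ≤ n → 1 ≤ τ n)
    (h : ∀ n, 1 ≤ n → R (X ^ n) = c n • X ^ τ n) {u : K[X]} (hu0 : u.coeff 0 = 0) (hu : u ≠ 0)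
    (hRu : R u = 0) {n : ℕ} (hn : 1 ≤ n) (hcn : c n ≠ 0) :
    ∃ B, ∀ i, B ≤ i → c (τ n * i) ≠ 0 ∧ τ (τ n * i) = τ n * i := by
  have hX0 : ((X : K[X]) ^ n).coeff 0 = 0 := by rw [coeff_X_pow, if_neg (by omega)]
  obtain ⟨p, hp, hpR⟩ := exists_poly_mem_ker hRB hu0 hu hRu hX0
  obtain ⟨w, hw0, hw1, hw2⟩ := exists_lift hRB hX0 p
  set t := τ n with ht
  have ht1 : 1 ≤ t := hτ n hn
  set q : K[X] := aeval (R (X ^ n)) (X * p) with hq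
  have hq0 : q.coeff 0 = 0 := by rw [← hw1]; exact hmap w hw0
  have hqR : R q = -q := by
    rw [← hw2, map_add, hw1] at hpR
    linear_combination hpR
  have hqexp : q = expand K t ((X * p).comp (C (c n) * X)) := by
    rw [hq, h n hn, expand_eq_comp_X_pow, comp_assoc, aeval_def, ← ht]
    simp [comp, smul_eq_C_mul]
  have hqne : q ≠ 0 := by
    rw [hqexp]
    refine (expand_ne_zero ht1).mpr ?_
    rw [Ne, comp_C_mul_X_eq_zero_iff]
    · exact mul_ne_zero X_ne_zero hp
    · exact mem_nonZeroDivisors_of_ne_zero hcn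
  have hdvd : ∀ e ∈ q.support, t ∣ e := by
    intro e he
    by_contra hcon
    apply mem_support_iff.mp he
    rw [hqexp, coeff_expand ht1, if_neg hcon]
  have hshift : ∀ j, R (q * X ^ (t * j)) = -(q * X ^ (t * j)) := by
    intro j
    induction j with
    | zero => simpa using hqR
    | succ j ih =>
      have := neg_eigen_mul hRB (by simp [mul_coeff_zero, hq0]) hX0 ih
      rw [h n hn, mul_smul_comm, map_smul, ← smul_neg] at this
      have := smul_right_injective _ hcn this
      rw [mul_add, mul_one, pow_add, ← mul_assoc]
      exact this
  have hsupp : ∀ j e, e ∈ (q * X ^ (t * j)).support ↔ t * j ≤ e ∧ e - t * j ∈ q.support := by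
    intro j e
    rw [mem_support_iff, coeff_mul_X_pow', mem_support_iff]
    split_ifs with hh
    · simp [hh]
    · simp [hh]
  set M := q.natDegree with hM
  have hMs : M ∈ q.support := natDegree_mem_support_of_nonzero hqne
  set m₀ := q.support.min' ⟨M, hMs⟩ with hm₀
  have hm₀s : m₀ ∈ q.support := Finset.min'_mem _ _
  obtain ⟨M', hM'⟩ := hdvd M hMs
  obtain ⟨m', hm'⟩ := hdvd m₀ hm₀s
  refine ⟨M', fun i hi => ?_⟩
  -- writing `t * i = e + t * j` for `e` in the support of `q` bounds `τ (t * i)`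
  -- on both sides, from the largest and the smallest `e`
  have hle : m₀ ≤ M := le_natDegree_of_mem_supp _ hm₀s
  have hle' : m' ≤ M' := by
    rw [hM', hm'] at hle; exact Nat.le_of_mul_le_mul_left hle ht1
  have step : ∀ e', e' ≤ i → t * e' ∈ q.support →
      c (t * i) ≠ 0 ∧ t * (i - e') ≤ τ (t * i) ∧ τ (t * i) - t * (i - e') ∈ q.support := by
    intro e' he' hes
    have hmem : t * i ∈ (q * X ^ (t * (i - e'))).support := by
      rw [hsupp]
      refine ⟨Nat.mul_le_mul_left _ (Nat.sub_le _ _), ?_⟩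
      rwa [← Nat.mul_sub, Nat.sub_sub_self he']
    have := mem_support_of_eigen h (by simp [mul_coeff_zero, hq0]) (hshift _) hmem
    rw [hsupp] at this
    exact this
  obtain ⟨h1, h2, h3⟩ := step M' hi (hM' ▸ hMs)
  obtain ⟨_, h4, h5⟩ := step m' (hle'.trans hi) (hm' ▸ hm₀s)
  refine ⟨h1, ?_⟩
  have a1 := le_natDegree_of_mem_supp _ h3
  have a2 : m₀ ≤ _ := Finset.min'_le _ _ h5
  rw [← hM, hM', Nat.mul_sub] at a1
  rw [hm', Nat.mul_sub] at a2
  rw [Nat.mul_sub] at h2 h4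
  have b1 : t * M' ≤ t * i := Nat.mul_le_mul_left _ hi
  have b2 : t * m' ≤ t * i := Nat.mul_le_mul_left _ (hle'.trans hi)
  omega

/-- A monomial operator with a monomial in its kernel vanishes. -/
lemma coeff_eq_zero_of_eq_zero (hmap : ∀ p : K[X], p.coeff 0 = 0 → (R p).coeff 0 = 0)
    (hRB : RBOne R) {c : ℕ → K} {τ : ℕ → ℕ} (hτ : ∀ n, 1 ≤ n → 1 ≤ τ n)
    (h : ∀ n, 1 ≤ n → R (X ^ n) = c n • X ^ τ n) {N : ℕ} (hN : 1 ≤ N) (hcN : c N = 0)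
    {n : ℕ} (hn : 1 ≤ n) : c n = 0 := by
  by_contra hcn
  have hX0 : ((X : K[X]) ^ N).coeff 0 = 0 := by rw [coeff_X_pow, if_neg (by omega)]
  have hRN : R (X ^ N) = 0 := by rw [h N hN, hcN, zero_smul]
  obtain ⟨B, hB⟩ := eventually_diagonal hmap hRB hτ h hX0 (pow_ne_zero _ X_ne_zero) hRN hn hcn
  have hpow : ∀ i, R ((X ^ N) * (X ^ N) ^ i) = 0 := fun i =>
    pow_mem (ker_mem_kerIdealizer hRB hX0 hRN) i _ hX0 hRN
  have hi : 1 ≤ τ n * (B + 1) := Nat.mul_pos (hτ n hn) (Nat.succ_pos _)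
  have h0 := hpow (τ n * (B + 1) - 1)
  rw [← pow_succ', Nat.sub_add_cancel hi, ← pow_mul] at h0
  have e : N * (τ n * (B + 1)) = τ n * ((B + 1) * N) := by ring
  rw [e, h _ (by rw [← e]; exact Nat.mul_pos hN hi)] at h0
  have hc := (hB ((B + 1) * N) (by nlinarith)).1
  exact hc ((smul_eq_zero.mp h0).resolve_right (pow_ne_zero _ X_ne_zero))

lemma exponent_eq_of_add {a b d : K} {p q r : ℕ} (ha : a ≠ 0) (hd : d ≠ 0)
    (h : a • (X : K[X]) ^ p + b • X ^ q = d • X ^ r) : p = r := by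
  by_contra hpr
  have h1 := congrArg (fun f => coeff f p) h
  have h2 := congrArg (fun f => coeff f r) h
  simp only [coeff_add, coeff_smul, coeff_X_pow, smul_eq_mul, if_true, if_neg hpr,
    if_neg (Ne.symm hpr), mul_one, mul_zero, zero_add] at h1 h2
  by_cases hpq : p = q
  · subst hpq; rw [if_neg (Ne.symm hpr)] at h2; apply hd; simpa using h2.symm
  · rw [if_neg hpq] at h1; apply ha; simpa using h1

lemma rb_monomial (hRB : RBOne R) {c : ℕ → K} {τ : ℕ → ℕ}
    (h : ∀ n, 1 ≤ n → R (X ^ n) = c n • X ^ τ n) {n m : ℕ} (hn : 1 ≤ n) (hm : 1 ≤ m) :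
    (c n * c m) • (X : K[X]) ^ (τ n + τ m) =
      c n • R (X ^ (τ n + m)) + c m • R (X ^ (n + τ m)) + R (X ^ (n + m)) := by
  have := hRB (X ^ n) (X ^ m) (by rw [coeff_X_pow, if_neg (by omega)])
    (by rw [coeff_X_pow, if_neg (by omega)])
  rw [h n hn, h m hm, smul_mul_smul_comm, ← pow_add, smul_mul_assoc, mul_smul_comm, ← pow_add,
    ← pow_add, ← pow_add, map_add, map_add, map_smul, map_smul] at this
  exact this

/-- A diagonal operator is determined by its eigenvalue on `x`, by the recursion
`(α_n + α + 1) α_(n+1) = α α_n`. -/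
lemma diagonal_formula (hRB : RBOne R) {c : ℕ → K}
    (h : ∀ n, 1 ≤ n → R (X ^ n) = c n • X ^ n) (n : ℕ) (hn : 1 ≤ n) :
    (c 1 + 1) ^ n ≠ c 1 ^ n ∧ c n = c 1 ^ n / ((c 1 + 1) ^ n - c 1 ^ n) := by
  induction n, hn using Nat.le_induction with
  | base => simp
  | succ n hn ih =>
    obtain ⟨hne, hcn⟩ := ih
    have e := rb_monomial (τ := id) hRB h hn le_rfl
    simp only [id] at e
    rw [h (n + 1) (by omega), smul_smul, smul_smul, ← add_smul, ← add_smul] at e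
    have e' := congrArg (fun f => coeff f (n + 1)) e
    simp only [coeff_smul, coeff_X_pow, if_true, smul_eq_mul, mul_one] at e'
    have hD : (c 1 + 1) ^ n - c 1 ^ n ≠ 0 := sub_ne_zero.mpr hne
    have hcn' : c n * ((c 1 + 1) ^ n - c 1 ^ n) = c 1 ^ n := by
      rw [hcn, div_mul_cancel₀ _ hD]
    have hrec : c (n + 1) * ((c 1 + 1) ^ (n + 1) - c 1 ^ (n + 1)) = c 1 ^ (n + 1) := by
      rw [pow_succ, pow_succ]
      linear_combination (-((c 1 + 1) ^ n - c 1 ^ n)) * e' + (c 1 - c (n + 1)) * hcn'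
    have hne' : (c 1 + 1) ^ (n + 1) ≠ c 1 ^ (n + 1) := by
      intro h0
      rw [h0, sub_self, mul_zero] at hrec
      have h1 : c 1 = 0 := eq_zero_of_pow_eq_zero hrec.symm
      rw [h1] at h0
      simp at h0
    exact ⟨hne', eq_div_of_mul_eq (sub_ne_zero.mpr hne') hrec⟩

variable [CharZero K]

/-- If no monomial is killed and `x^n ↦ x^t`, then `x^(an + bt) ↦ x^((a + b)t)` (up to scalars)
whenever `a ≥ 1` and `a + b` is a power of two. -/
lemma exponent_level (hRB : RBOne R) {c : ℕ → K} {τ : ℕ → ℕ}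
    (h : ∀ n, 1 ≤ n → R (X ^ n) = c n • X ^ τ n) (hc : ∀ n, 1 ≤ n → c n ≠ 0) {n : ℕ} (hn : 1 ≤ n)
    (l : ℕ) : ∀ a b, 1 ≤ a → a + b = 2 ^ l → τ (a * n + b * τ n) = 2 ^ l * τ n := by
  have pos : ∀ a b, 1 ≤ a → 1 ≤ a * n + b * τ n := fun a b ha =>
    le_trans (Nat.mul_pos ha hn) (Nat.le_add_right _ _)
  induction l with
  | zero =>
    intro a b ha hab
    obtain ⟨rfl, rfl⟩ : a = 1 ∧ b = 0 := by simp at hab; omega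
    simp
  | succ l ih =>
    have low : ∀ a b, 1 ≤ a → a + b = 2 ^ l →
        τ (a * n + (b + 2 ^ l) * τ n) = 2 ^ (l + 1) * τ n := by
      intro a b ha hab
      have hp := pos a b ha
      have e := rb_monomial hRB h hp hp
      rw [ih a b ha hab] at e
      have i1 : 2 ^ l * τ n + (a * n + b * τ n) = a * n + (b + 2 ^ l) * τ n := by ring
      have i2 : a * n + b * τ n + 2 ^ l * τ n = a * n + (b + 2 ^ l) * τ n := by ring
      rw [i1, i2, h _ (pos _ _ ha), h (_ + _) (by omega), ← add_smul, smul_smul] at e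
      have hcp := hc _ hp
      rw [exponent_eq_of_add (mul_ne_zero (by rw [← two_mul]; exact mul_ne_zero two_ne_zero hcp)
        (hc _ (pos _ _ ha))) (mul_ne_zero hcp hcp) e.symm]
      ring
    intro a b ha hab
    rw [pow_succ] at hab
    by_cases hle : a ≤ 2 ^ l
    · have := low a (2 ^ l - a) ha (by omega)
      rwa [show 2 ^ l - a + 2 ^ l = b by omega] at this
    · obtain ⟨a', rfl⟩ : ∃ a', a = 2 ^ l + a' := ⟨a - 2 ^ l, by omega⟩
      have ha' : 1 ≤ a' := by omega
      have hl : 1 ≤ 2 ^ l := Nat.one_le_two_pow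
      have hp := pos (2 ^ l) 0 hl
      have hp' := pos a' b ha'
      have e := rb_monomial hRB h hp hp'
      have t1 := ih (2 ^ l) 0 hl (by omega)
      have t2 := ih a' b ha' (by omega)
      have t3 := low (2 ^ l) 0 hl (by omega)
      have t4 := low a' b ha' (by omega)
      rw [t1, t2] at e
      have i1 : 2 ^ l * τ n + (a' * n + b * τ n) = a' * n + (b + 2 ^ l) * τ n := by ring
      have i2 : 2 ^ l * n + 0 * τ n + 2 ^ l * τ n = 2 ^ l * n + (0 + 2 ^ l) * τ n := by ring
      have i3 : 2 ^ l * n + 0 * τ n + (a' * n + b * τ n) = (2 ^ l + a') * n + b * τ n := by ring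
      rw [i1, i2, i3, h _ (pos _ _ ha'), h _ (pos _ _ hl), h _ (pos _ _ ha), t3, t4,
        show 2 ^ l * τ n + 2 ^ l * τ n = 2 ^ (l + 1) * τ n by ring, smul_smul, smul_smul,
        ← add_smul, ← sub_eq_iff_eq_add', ← sub_smul] at e
      have hca := hc _ (pos (2 ^ l + a') b ha)
      by_contra hne
      have := congrArg (fun f => coeff f (τ ((2 ^ l + a') * n + b * τ n))) e
      simp only [coeff_smul, coeff_X_pow, if_true, if_neg hne, smul_eq_mul, mul_zero,
        mul_one] at this
      exact hca this.symm

/-- If no monomial is killed, then `R` is diagonal. -/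
lemma exponent_eq_self (hmap : ∀ p : K[X], p.coeff 0 = 0 → (R p).coeff 0 = 0)
    (hRB : RBOne R) {c : ℕ → K} {τ : ℕ → ℕ} (hτ : ∀ n, 1 ≤ n → 1 ≤ τ n)
    (h : ∀ n, 1 ≤ n → R (X ^ n) = c n • X ^ τ n) (hc : ∀ n, 1 ≤ n → c n ≠ 0) {n : ℕ}
    (hn : 1 ≤ n) : τ n = n := by
  by_contra hne
  have ht := hτ n hn
  have e1 := exponent_level hRB h hc hn 1 2 0 (by norm_num) (by norm_num)
  have e2 := exponent_level hRB h hc hn 1 1 1 (by norm_num) (by norm_num)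
  have p1 : 1 ≤ 2 * n + 0 * τ n := by omega
  have p2 : 1 ≤ 1 * n + 1 * τ n := by omega
  -- two distinct monomials with proportional images give a binomial in the kernel
  set u : K[X] := c (1 * n + 1 * τ n) • X ^ (2 * n + 0 * τ n)
    - c (2 * n + 0 * τ n) • X ^ (1 * n + 1 * τ n) with hu
  have hRu : R u = 0 := by
    rw [hu, map_sub, map_smul, map_smul, h _ p1, h _ p2, e1, e2, smul_smul, smul_smul, mul_comm,
      sub_self]
  have hu0 : u.coeff 0 = 0 := by
    rw [hu, coeff_sub, coeff_smul, coeff_smul, coeff_X_pow, coeff_X_pow, if_neg (by omega),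
      if_neg (by omega)]
    simp
  have hune : u ≠ 0 := by
    intro h0
    have := congrArg (fun f => coeff f (1 * n + 1 * τ n)) h0
    simp only [hu, coeff_sub, coeff_smul, coeff_X_pow, if_true, coeff_zero] at this
    rw [if_neg (by omega)] at this
    apply hc _ p1
    simpa using this
  obtain ⟨B, hB⟩ := eventually_diagonal hmap hRB hτ h hu0 hune hRu hn (hc n hn)
  have hl : τ n + B ≤ 2 ^ (τ n + B) := Nat.lt_two_pow_self.le
  set l := τ n + B with hldef
  -- `x^(t n + (2^l - t) t)` is a power of `x^t`, yet it is sent to `x^(2^l t)`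
  have e3 := exponent_level hRB h hc hn l (τ n) (2 ^ l - τ n) ht (by omega)
  have e4 := (hB (n + (2 ^ l - τ n)) (by omega)).2
  rw [show τ n * (n + (2 ^ l - τ n)) = τ n * n + (2 ^ l - τ n) * τ n by ring, e3,
    show τ n * n + (2 ^ l - τ n) * τ n = (n + (2 ^ l - τ n)) * τ n by ring] at e4
  have := Nat.eq_of_mul_eq_mul_right ht e4
  omega

end

/- STATEMENT 1.
`k₀[x]` (polynomials over `K` without constant term) is encoded as the subspace
`{p : K[X] | p.coeff 0 = 0}` of `Polynomial K`; an operator on `k₀[x]` is a linear map `R`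
preserving this subspace (`hmap`), and the Rota–Baxter identity of weight 1 (`hRB`) and
monomiality (`hmono`) are imposed on this subspace.  Conclusion: Theorem 2 of the paper. -/
theorem monomial_RB_weight_one_on_k0x
    {K : Type*} [Field K] [CharZero K]
    (R : Polynomial K →ₗ[K] Polynomial K)
    (hmap : ∀ p : Polynomial K, p.coeff 0 = 0 → (R p).coeff 0 = 0)
    (hRB : ∀ u v : Polynomial K, u.coeff 0 = 0 → v.coeff 0 = 0 →
      R u * R v = R (R u * v + u * R v + u * v))
    (hmono : ∀ n : ℕ, 1 ≤ n → ∃ (α : K) (t : ℕ), 1 ≤ t ∧ R (X ^ n) = α • X ^ t) :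
    ∃ α : K, (∀ n : ℕ, 1 ≤ n → (α + 1) ^ n ≠ α ^ n) ∧
      ∀ n : ℕ, 1 ≤ n →
        R (X ^ n) = (α ^ n / ((α + 1) ^ n - α ^ n)) • X ^ n := by
  choose! c τ hτ h using hmono
  have hRB' : RBOne R := hRB
  have hdiag : ∀ n, 1 ≤ n → R (X ^ n) = c n • X ^ n := by
    by_cases hz : ∃ N, 1 ≤ N ∧ c N = 0
    · obtain ⟨N, hN, hcN⟩ := hz
      intro n hn
      rw [h n hn, coeff_eq_zero_of_eq_zero hmap hRB' hτ h hN hcN hn, zero_smul, zero_smul]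
    · push Not at hz
      intro n hn
      have e := exponent_eq_self hmap hRB' hτ h hz hn
      rw [h n hn, e]
  refine ⟨c 1, fun n hn => (diagonal_formula hRB' hdiag n hn).1, fun n hn => ?_⟩
  rw [hdiag n hn, ← (diagonal_formula hRB' hdiag n hn).2]
end

section
/- Let R be an injective monomial Rota–Baxter operator of weight 1 on k₀[x_1, …, x_n] (the free commutative non-unital algebra on n generators). Then there exist nonzero scalars α_1, …, α_n ∈ k such that for all exponents i_1, …, i_n ≥ 0 with i_1 + … + i_n > 0, the denominator (α_1+1)^{i_1}⋯(α_n+1)^{i_n} − α_1^{i_1}⋯α_n^{i_n} is nonzero and R(x_1^{i_1}⋯x_n^{i_n}) = (α_1^{i_1}⋯α_n^{i_n} / ((α_1+1)^{i_1}⋯(α_n+1)^{i_n} − α_1^{i_1}⋯α_n^{i_n})) · x_1^{i_1}⋯x_n^{i_n}. -/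
/-!
Write `R x^i = c(i) x^{t(i)}`. Injectivity of `R` forces `c(i) ≠ 0` and makes `t` injective.
The Rota–Baxter identity at `u = v = x^i` reads
`c(i)² x^{2 t(i)} = 2 c(i) R(x^{t(i)+i}) + R(x^{2i})`. If `t(i) ≠ i`, the right-hand side would have
two distinct monomials with nonzero coefficients; hence `t(i) = i`, so `R` is diagonal.
The identity then becomes `c(i) c(j) = c(i+j) (c(i) + c(j) + 1)`, which says exactly that
`g(i) = 1 + 1 / c(i)`, with `g(0) = 1`, is multiplicative. So `g` is determined by its values
`(α_j + 1) / α_j` on the generators, where `α_j = c(e_j)`, and solving for `c(i)` gives the formula.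
The two steps are `monomial_RB_diagonal` and `mul_prod_eq_prod_of_map_add`.
-/

open MvPolynomial

/-- The monomials of `k₀[x_1, …, x_n]` are eigenvectors of `R`, with nonzero eigenvalues. -/
theorem monomial_RB_diagonal
    {K : Type*} [Field K] [CharZero K] {n : ℕ}
    (R : MvPolynomial (Fin n) K →ₗ[K] MvPolynomial (Fin n) K)
    (hRB : ∀ u v : MvPolynomial (Fin n) K,
      constantCoeff u = 0 → constantCoeff v = 0 →
      R u * R v = R (R u * v + u * R v + u * v))
    (hinj : ∀ u : MvPolynomial (Fin n) K, constantCoeff u = 0 → R u = 0 → u = 0)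
    (hmono : ∀ i : Fin n →₀ ℕ, i ≠ 0 → ∃ (α : K) (t : Fin n →₀ ℕ),
      t ≠ 0 ∧ R (monomial i (1 : K)) = α • monomial t (1 : K)) :
    ∀ i : Fin n →₀ ℕ, i ≠ 0 → ∃ α : K, α ≠ 0 ∧ R (monomial i (1 : K)) = monomial i α := by
  have hcc : ∀ (i : Fin n →₀ ℕ) (a : K), i ≠ 0 → constantCoeff (monomial i a) = 0 := by
    intro i a hi
    rw [constantCoeff_monomial, if_neg hi]
  have hsc : ∀ (i : Fin n →₀ ℕ) (a : K), R (monomial i a) = a • R (monomial i 1) := by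
    intro i a
    rw [← map_smul, smul_monomial, smul_eq_mul, mul_one]
  choose! c t ht hR using hmono
  have hR' : ∀ i, i ≠ 0 → R (monomial i (1 : K)) = monomial (t i) (c i) := by
    intro i hi
    rw [hR i hi, smul_monomial, smul_eq_mul, mul_one]
  have hc : ∀ i, i ≠ 0 → c i ≠ 0 := by
    intro i hi h0
    have h := hinj _ (hcc i 1 hi) (by rw [hR i hi, h0, zero_smul])
    exact one_ne_zero (monomial_eq_zero.1 h)
  have htinj : ∀ i j, i ≠ 0 → j ≠ 0 → t i = t j → i = j := by
    intro i j hi hj h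
    by_contra hij
    have h0 := hinj (monomial i (c j) - monomial j (c i))
      (by rw [map_sub, hcc i _ hi, hcc j _ hj, sub_zero])
      (by rw [map_sub, hsc i, hsc j, hR' i hi, hR' j hj, h, smul_monomial, smul_monomial,
            smul_eq_mul, smul_eq_mul, mul_comm, sub_self])
    have h1 := congrArg (coeff i) h0
    rw [coeff_sub, coeff_monomial, coeff_monomial, if_pos rfl, if_neg (Ne.symm hij),
      sub_zero, coeff_zero] at h1
    exact hc j hj h1
  intro i hi
  refine ⟨c i, hc i hi, ?_⟩
  suffices hti : t i = i by rw [hR' i hi, hti]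
  by_contra hne
  have hii : i + i ≠ 0 := by simpa using hi
  have hti0 : t i + i ≠ 0 := by simp [hi]
  have h := hRB _ _ (hcc i 1 hi) (hcc i 1 hi)
  rw [hR' i hi] at h
  simp only [monomial_mul, mul_one, one_mul, map_add] at h
  rw [add_comm i (t i), hsc _ (c i), hR' _ hti0, hR' _ hii] at h
  simp only [smul_monomial, smul_eq_mul] at h
  -- The two monomials on the right are distinct, so the single one on the left cannot be both.
  have hab : t (t i + i) ≠ t (i + i) := fun h' =>
    hne (add_right_cancel (htinj _ _ hti0 hii h'))
  have ha := congrArg (coeff (t (t i + i))) h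
  have hb := congrArg (coeff (t (i + i))) h
  simp only [coeff_add, coeff_monomial, if_neg hab, if_neg hab.symm, if_true, add_zero,
    zero_add] at ha hb
  have h1 := hc i hi
  have h2 := hc _ hti0
  have h3 := hc _ hii
  have e2 : t i + t i = t (i + i) := by
    by_contra h'
    rw [if_neg h'] at hb
    exact h3 hb.symm
  have e1 : t i + t i = t (t i + i) := by
    by_contra h'
    rw [if_neg h', ← two_mul] at ha
    exact mul_ne_zero two_ne_zero (mul_ne_zero h1 h2) ha.symm
  exact hab (e1.symm.trans e2)

/-- A multiplicative function on exponent vectors is determined by its values on the generators.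
The relation is stated without division, for values of the form `b j / a j`. -/
theorem mul_prod_eq_prod_of_map_add {K : Type*} [Field K] {n : ℕ}
    (g : (Fin n →₀ ℕ) → K) (a b : Fin n → K) (h0 : g 0 = 1)
    (hadd : ∀ i j, g (i + j) = g i * g j)
    (hgen : ∀ j, g (Finsupp.single j 1) * a j = b j) (i : Fin n →₀ ℕ) :
    g i * ∏ j, a j ^ i j = ∏ j, b j ^ i j := by
  have step : ∀ p q : Fin n →₀ ℕ, g p * ∏ j, a j ^ p j = ∏ j, b j ^ p j →
      g q * ∏ j, a j ^ q j = ∏ j, b j ^ q j →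
      g (p + q) * ∏ j, a j ^ (p + q) j = ∏ j, b j ^ (p + q) j := by
    intro p q hp hq
    simp only [Finsupp.add_apply, pow_add, Finset.prod_mul_distrib]
    rw [← hp, ← hq, hadd]
    ring
  have single_prod : ∀ (f : Fin n → K) (l : Fin n),
      ∏ j, f j ^ (Finsupp.single l 1 : Fin n →₀ ℕ) j = f l := by
    intro f l
    rw [Finset.prod_eq_single l]
    · simp
    · intro j _ hj
      simp [Finsupp.single_eq_of_ne hj]
    · simp
  induction i using Finsupp.induction_linear with
  | zero => simp [h0]
  | add p q hp hq => exact step p q hp hq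
  | single l m =>
    induction m with
    | zero => simp [h0]
    | succ m ih =>
      rw [Finsupp.single_add]
      exact step _ _ ih (by rw [single_prod, single_prod, hgen])

/- STATEMENT 2.
`k₀[x_1, …, x_n]`, the free commutative non-unital algebra on `n` generators over a field `K`
of characteristic zero, is encoded as the subspace `{p | constantCoeff p = 0}` of
`MvPolynomial (Fin n) K`.  An operator on it is a linear map `R` preserving this subspace
(`hmap`); the weight-1 Rota–Baxter identity (`hRB`), injectivity (`hinj`) and monomiality
(`hmono`) are imposed on this subspace.  Monomials of `k₀[x_1,…,x_n]` are
`monomial i 1` with `i ≠ 0`, i.e. `x_1^{i_1}⋯x_n^{i_n}` with `i_1 + … + i_n > 0`. -/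
theorem injective_monomial_RB_weight_one_on_k0X
    {K : Type*} [Field K] [CharZero K] (n : ℕ)
    (R : MvPolynomial (Fin n) K →ₗ[K] MvPolynomial (Fin n) K)
    (hmap : ∀ p : MvPolynomial (Fin n) K,
      constantCoeff p = 0 → constantCoeff (R p) = 0)
    (hRB : ∀ u v : MvPolynomial (Fin n) K,
      constantCoeff u = 0 → constantCoeff v = 0 →
      R u * R v = R (R u * v + u * R v + u * v))
    (hinj : ∀ u : MvPolynomial (Fin n) K, constantCoeff u = 0 → R u = 0 → u = 0)
    (hmono : ∀ i : Fin n →₀ ℕ, i ≠ 0 → ∃ (α : K) (t : Fin n →₀ ℕ),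
      t ≠ 0 ∧ R (monomial i (1 : K)) = α • monomial t (1 : K)) :
    ∃ α : Fin n → K, (∀ j, α j ≠ 0) ∧
      ∀ i : Fin n →₀ ℕ, i ≠ 0 →
        (∏ j, (α j + 1) ^ i j) - (∏ j, (α j) ^ i j) ≠ 0 ∧
        R (monomial i (1 : K)) =
          ((∏ j, (α j) ^ i j) / ((∏ j, (α j + 1) ^ i j) - ∏ j, (α j) ^ i j)) •
            monomial i (1 : K) := by
  have hdiag := monomial_RB_diagonal R hRB hinj hmono
  choose! c hc hR using hdiag
  have hcc : ∀ i : Fin n →₀ ℕ, i ≠ 0 → constantCoeff (monomial i (1 : K)) = 0 := by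
    intro i hi
    rw [constantCoeff_monomial, if_neg hi]
  have hsc : ∀ (i : Fin n →₀ ℕ) (a : K), i ≠ 0 → R (monomial i a) = monomial i (a * c i) := by
    intro i a hi
    rw [← smul_eq_mul, ← smul_monomial, ← hR i hi, ← map_smul, smul_monomial, smul_eq_mul, mul_one]
  have hmul : ∀ i j, i ≠ 0 → j ≠ 0 → c i * c j = (c i + c j + 1) * c (i + j) := by
    intro i j hi hj
    have hij : i + j ≠ 0 := by simp [hi]
    have h := hRB _ _ (hcc i hi) (hcc j hj)
    rw [hR i hi, hR j hj] at h
    simp only [monomial_mul, mul_one, one_mul] at h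
    rw [← map_add (monomial (i + j)), ← map_add (monomial (i + j)), hsc _ _ hij] at h
    simpa [coeff_monomial] using congrArg (coeff (i + j)) h
  classical
  let g : (Fin n →₀ ℕ) → K := fun i => if i = 0 then 1 else 1 + 1 / c i
  have hg : ∀ i, i ≠ 0 → g i = 1 + 1 / c i := fun i hi => if_neg hi
  have hg0 : g 0 = 1 := if_pos rfl
  have hadd : ∀ i j, g (i + j) = g i * g j := by
    intro i j
    by_cases hi : i = 0
    · rw [hi, zero_add, hg0, one_mul]
    by_cases hj : j = 0
    · rw [hj, add_zero, hg0, mul_one]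
    have hij : i + j ≠ 0 := by simp [hi]
    rw [hg i hi, hg j hj, hg _ hij]
    have h1 := hc i hi
    have h2 := hc j hj
    have h3 := hc _ hij
    have h := hmul i j hi hj
    field_simp
    linear_combination h
  have hs : ∀ j : Fin n, (Finsupp.single j 1 : Fin n →₀ ℕ) ≠ 0 := fun j => by simp
  refine ⟨fun j => c (Finsupp.single j 1), fun j => hc _ (hs j), fun i hi => ?_⟩
  have key := mul_prod_eq_prod_of_map_add g (fun j => c (Finsupp.single j 1))
    (fun j => c (Finsupp.single j 1) + 1) hg0 hadd
    (fun j => by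
      have := hc _ (hs j)
      rw [hg _ (hs j)]
      field_simp) i
  have hP : ∏ j, c (Finsupp.single j 1) ^ i j ≠ 0 :=
    Finset.prod_ne_zero_iff.2 fun j _ => pow_ne_zero _ (hc _ (hs j))
  have hci := hc i hi
  rw [hg i hi] at key
  simp only at key ⊢
  rw [← key]
  have hd : (1 + 1 / c i) * ∏ j, c (Finsupp.single j 1) ^ i j
      - ∏ j, c (Finsupp.single j 1) ^ i j = (∏ j, c (Finsupp.single j 1) ^ i j) / c i := by
    ring
  rw [hd]
  refine ⟨div_ne_zero hP hci, ?_⟩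
  rw [div_div_cancel₀ hP, hR i hi, smul_monomial, smul_eq_mul, mul_one]
end

section
/- Let R be a nonzero monomial Rota–Baxter operator of weight 0 on the polynomial algebra k[x]. Then there exist a positive integer m, nonnegative integers p_0, …, p_{m−1}, and scalars q_0, …, q_{m−1} ∈ k such that for each b one has p_b = 0 if and only if q_b = 0, and for all integers a ≥ 0 and all b with 0 ≤ b < m: R(x^{ma+b}) = 0 if q_b = 0, and R(x^{ma+b}) = (q_b / (m(a + p_b))) · x^{m(a+p_b)} if q_b ≠ 0. -/
open Polynomial

/-!
Write `R (x ^ n) = α n • x ^ t n` and let `S = {n | α n ≠ 0}`. Evaluating the Rota–Baxter identity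
on `x ^ n, x ^ l` gives an identity between three monomials, recorded coefficientwise in
`RBRel α t`. Taking `l = n + k * t n` shows, by induction on `k`, that
`R (x ^ (n + k * t n)) = (α n / (k + 1)) • x ^ ((k + 1) * t n)` for `n ∈ S` (`RBRel.diag`); in
particular `t n > 0`.

For `n ∈ S` the complement of `S` is stable under the shift by `t n`. So is `S`: for `l ∈ S` the
exponent `l + t l * t n` is reached from `l` both by steps of length `t l`, so it lies in `S`, and
by steps of length `t n`, so it could not lie in `S` if `l + t n` did not. Comparing exponents then
gives `t (l + t n) = t l + t n`. For the coefficients, the identity for the pairs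
`(n, l + k * t n)` and `(n + k * t n, l)` forces `α l / α (l + k * t n)` to be affine in `k`, and
its value at `k = t l` is known from `RBRel.diag`; hence `α (l + t n) * (t l + t n) = α l * t l`.

So `n ↦ (α n * t n, t n - n)` (the second entry replaced by `0` off `S`) is periodic with period
`t n` for each `n ∈ S`. Its least positive period `m` divides all these `t n`, and
`q b = α b * t b`, `p b = t b / m` are the required data.
-/

/-- The weight-zero Rota–Baxter identity for the operator `x ^ n ↦ α n • x ^ t n`, on the pair
`x ^ n, x ^ l`, as an equality of the coefficients of `x ^ j`. -/
def RBRel {K : Type*} [Field K] (α : ℕ → K) (t : ℕ → ℕ) : Prop :=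
  ∀ n l j : ℕ, α n * α l * (if j = t n + t l then 1 else 0) =
    α n * α (l + t n) * (if j = t (l + t n) then 1 else 0) +
    α l * α (n + t l) * (if j = t (n + t l) then 1 else 0)

namespace RBRel

variable {K : Type*} [Field K] {α : ℕ → K} {t : ℕ → ℕ}

theorem shift_zero (H : RBRel α t) {n l : ℕ} (hn : α n ≠ 0) (hl : α l = 0) (k : ℕ) :
    α (l + k * t n) = 0 := by
  induction k with
  | zero => simpa using hl
  | succ k ih =>
    have h := H n (l + k * t n) (t (l + k * t n + t n))
    rw [ih, if_pos rfl] at h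
    have e1 : l + k * t n + t n = l + (k + 1) * t n := by ring
    rw [e1] at h
    simpa [hn] using h

variable [CharZero K]

theorem diag (H : RBRel α t) {n : ℕ} (hn : α n ≠ 0) (k : ℕ) :
    α (n + k * t n) * (k + 1) = α n ∧ t (n + k * t n) = (k + 1) * t n := by
  induction k with
  | zero => simp
  | succ k ih =>
    obtain ⟨h1, h2⟩ := ih
    have e1 : n + k * t n + t n = n + (k + 1) * t n := by ring
    have e2 : n + t (n + k * t n) = n + (k + 1) * t n := by rw [h2]
    have e3 : t n + t (n + k * t n) = (k + 1 + 1) * t n := by rw [h2]; ring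
    have h := H n (n + k * t n) ((k + 1 + 1) * t n)
    rw [e1, e2, e3, if_pos rfl] at h
    have hk : (k : K) + 1 ≠ 0 := Nat.cast_add_one_ne_zero k
    have hr : α (n + k * t n) ≠ 0 := fun h0 => hn (by rw [← h1, h0, zero_mul])
    by_cases ht : (k + 1 + 1) * t n = t (n + (k + 1) * t n)
    · rw [if_pos ht] at h
      refine ⟨?_, ht.symm⟩
      push_cast
      apply mul_left_cancel₀ hr
      linear_combination (-1 : K) * h + α (n + (k + 1) * t n) * h1
    · rw [if_neg ht] at h
      simp [hn, hr] at h

theorem t_pos (H : RBRel α t) {n : ℕ} (hn : α n ≠ 0) : 0 < t n := by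
  rcases Nat.eq_zero_or_pos (t n) with h0 | h0
  · have h := (H.diag hn 1).1
    rw [h0] at h
    simp only [mul_zero, add_zero, Nat.cast_one] at h
    exact absurd (by linear_combination h) hn
  · exact h0

theorem shift_ne (H : RBRel α t) {n l : ℕ} (hn : α n ≠ 0) (hl : α l ≠ 0) :
    α (l + t n) ≠ 0 := by
  intro h0
  have h1 := H.shift_zero hn h0 (t l - 1)
  have e : l + t n + (t l - 1) * t n = l + t n * t l := by
    obtain ⟨c, hc⟩ := Nat.exists_eq_succ_of_ne_zero (H.t_pos hl).ne'
    rw [hc, Nat.succ_eq_add_one, Nat.add_sub_cancel]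
    ring
  rw [e] at h1
  have h2 := (H.diag hl (t n)).1
  rw [h1, zero_mul] at h2
  exact hl h2.symm

theorem shift_t (H : RBRel α t) {n l : ℕ} (hn : α n ≠ 0) (hl : α l ≠ 0) :
    t (l + t n) = t n + t l := by
  have hA := H.shift_ne hn hl
  have hB := H.shift_ne hl hn
  by_contra hne
  have h := H n l (t n + t l)
  rw [if_pos rfl, if_neg (Ne.symm hne)] at h
  by_cases hBC : t n + t l = t (n + t l)
  · have h' := H n l (t (l + t n))
    rw [if_pos rfl, if_neg hne, ← hBC, if_neg hne] at h'
    simp [hn, hA] at h'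
  · rw [if_neg hBC] at h
    simp [hn, hl] at h

theorem coef (H : RBRel α t) {n l : ℕ} (hn : α n ≠ 0) (hl : α l ≠ 0) :
    α n * α l = α n * α (l + t n) + α l * α (n + t l) := by
  have h := H n l (t n + t l)
  rw [H.shift_t hn hl, H.shift_t hl hn, add_comm (t l) (t n)] at h
  simpa using h

theorem iter (H : RBRel α t) {n l : ℕ} (hn : α n ≠ 0) (hl : α l ≠ 0) (k : ℕ) :
    α (l + k * t n) ≠ 0 ∧ t (l + k * t n) = t l + k * t n := by
  induction k with
  | zero => simpa using hl
  | succ k ih =>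
    have e1 : l + (k + 1) * t n = l + k * t n + t n := by ring
    rw [e1]
    refine ⟨H.shift_ne hn ih.1, ?_⟩
    rw [H.shift_t hn ih.1, ih.2]
    ring

/-- Along the progression `l + k * t n` the quotient `α l / α (l + k * t n)` is affine in `k`. -/
theorem affine (H : RBRel α t) {n l : ℕ} (hn : α n ≠ 0) (hl : α l ≠ 0) (k : ℕ) :
    α (l + k * t n) * (1 + k * (α l / α (l + t n) - 1)) = α l := by
  have hr1 := H.shift_ne hn hl
  rcases k with _ | k
  · simp
  induction k with
  | zero =>
    simp only [zero_add, one_mul, Nat.cast_one]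
    field_simp
    ring
  | succ k ih =>
    obtain ⟨hr, ht⟩ := H.iter hn hl (k + 1)
    obtain ⟨hd, htd⟩ := H.diag hn (k + 1)
    have hnd : α (n + (k + 1) * t n) ≠ 0 := (H.iter hn hn (k + 1)).1
    have c1 := H.coef hn hr
    have c2 := H.coef hnd hl
    have e1 : l + (k + 1) * t n + t n = l + (k + 1 + 1) * t n := by ring
    have e2 : n + t (l + (k + 1) * t n) = n + (k + 1) * t n + t l := by rw [ht]; ring
    rw [e1, e2] at c1
    rw [htd] at c2
    push_cast at ih hd ⊢
    generalize α l / α (l + t n) - 1 = v at ih ⊢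
    generalize α (n + (k + 1) * t n + t l) = s at c1 c2
    generalize α (l + (k + 1 + 1) * t n) = r' at c1 c2 ⊢
    generalize α (l + (k + 1) * t n) = r at ih hr c1
    generalize α (n + (k + 1) * t n) = d at hd hnd c2
    have hk : (k : K) + 1 ≠ 0 := Nat.cast_add_one_ne_zero k
    have key : (α l - r') * r = (k + 1 + 1) * α l * (r - r') := by
      apply mul_left_cancel₀ hn
      linear_combination ((k : K) + 1 + 1) * r * c2 - ((k : K) + 1 + 1) * α l * c1 -
        r * (α l - r') * hd
    apply mul_left_cancel₀ (mul_ne_zero hk hr)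
    linear_combination key + ((k : K) + 1 + 1) * r' * ih

/-- The function `l ↦ α l * t l` on the support of `α` is invariant under the shift by `t n`. -/
theorem shift_beta (H : RBRel α t) {n l : ℕ} (hn : α n ≠ 0) (hl : α l ≠ 0) :
    α (l + t n) * t (l + t n) = α l * t l := by
  -- At `k = t l` the affine function of `affine` has the value `1 + t n` given by `diag`.
  have h1 := H.affine hn hl (t l)
  have h2 := (H.diag hl (t n)).1
  rw [mul_comm (t n) (t l)] at h2
  have hr := (H.iter hn hl (t l)).1
  have hr1 := H.shift_ne hn hl
  have h3 := mul_left_cancel₀ hr (h1.trans h2.symm)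
  rw [H.shift_t hn hl]
  push_cast
  field_simp at h3
  linear_combination (-1 : K) * h3

/-- The pair `(α n * t n, t n - n)`, with second entry `0` where `α n = 0`, since `t n` carries no
information there. Together with `n` it determines the value of the operator at `x ^ n`. -/
noncomputable def data (α : ℕ → K) (t : ℕ → ℕ) (n : ℕ) : K × ℤ :=
  open Classical in (α n * t n, if α n = 0 then 0 else (t n : ℤ) - n)

theorem data_periodic (H : RBRel α t) {n : ℕ} (hn : α n ≠ 0) :
    Function.Periodic (data α t) (t n) := by
  intro l
  by_cases hl : α l = 0
  · have h := H.shift_zero hn hl 1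
    rw [one_mul] at h
    simp [data, hl, h]
  · have h := H.shift_ne hn hl
    have h1 := H.shift_beta hn hl
    have h2 := H.shift_t hn hl
    simp only [data, hl, h, if_false, h1, Prod.mk.injEq, true_and]
    rw [h2]
    push_cast
    ring

end RBRel

/-- The least positive period of a function on `ℕ` divides every period. -/
theorem exists_period_dvd {β : Type*} {f : ℕ → β} {c : ℕ} (hc : 0 < c)
    (hf : Function.Periodic f c) :
    ∃ m, 0 < m ∧ Function.Periodic f m ∧ ∀ d, Function.Periodic f d → m ∣ d := by
  classical
  have hex : ∃ m, 0 < m ∧ Function.Periodic f m := ⟨c, hc, hf⟩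
  obtain ⟨hm, hp⟩ := Nat.find_spec hex
  refine ⟨Nat.find hex, hm, hp, fun d hd => ?_⟩
  rw [Nat.dvd_iff_mod_eq_zero]
  by_contra h0
  refine Nat.find_min hex (Nat.mod_lt d hm) ⟨Nat.pos_of_ne_zero h0, fun x => ?_⟩
  have h1 := hp.nat_mul (d / Nat.find hex) (x + d % Nat.find hex)
  rw [← h1, ← hd x, Nat.cast_id, add_assoc, mul_comm, Nat.mod_add_div]

/- STATEMENT 3.  (Corollary 2 of the paper.)
Classification of nonzero monomial Rota–Baxter operators of weight 0 on the (unital)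
polynomial algebra `K[x]` over a field `K` of characteristic zero. -/
theorem monomial_RB_weight_zero_on_kx
    {K : Type*} [Field K] [CharZero K]
    (R : Polynomial K →ₗ[K] Polynomial K)
    (hRB : ∀ u v : Polynomial K, R u * R v = R (R u * v + u * R v))
    (hmono : ∀ n : ℕ, ∃ (α : K) (t : ℕ), R (X ^ n) = α • X ^ t)
    (hne : R ≠ 0) :
    ∃ m : ℕ, 0 < m ∧ ∃ (p : ℕ → ℕ) (q : ℕ → K),
      ∀ b : ℕ, b < m →
        (p b = 0 ↔ q b = 0) ∧
        ∀ a : ℕ,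
          (q b = 0 → R (X ^ (m * a + b)) = 0) ∧
          (q b ≠ 0 →
            R (X ^ (m * a + b)) =
              (q b / ((m * (a + p b) : ℕ) : K)) • X ^ (m * (a + p b))) := by
  choose α t hR using hmono
  have H : RBRel α t := by
    intro n l j
    have h := congrArg (fun P => Polynomial.coeff P j) (hRB (X ^ n) (X ^ l))
    have e1 : (α n • X ^ t n : K[X]) * X ^ l = α n • X ^ (l + t n) := by
      rw [smul_mul_assoc, ← pow_add, add_comm]
    have e2 : X ^ n * (α l • X ^ t l : K[X]) = α l • X ^ (n + t l) := by
      rw [mul_smul_comm, ← pow_add]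
    have e3 : (α n • X ^ t n : K[X]) * (α l • X ^ t l) = (α n * α l) • X ^ (t n + t l) := by
      rw [smul_mul_smul_comm, ← pow_add]
    rw [hR n, hR l, e1, e2, e3, map_add, map_smul, map_smul, hR, hR] at h
    simpa only [coeff_add, coeff_smul, coeff_X_pow, smul_eq_mul, mul_assoc] using h
  obtain ⟨n₀, hn₀⟩ : ∃ n, α n ≠ 0 := by
    by_contra! h0
    refine hne (Polynomial.lhom_ext' fun n => LinearMap.ext_ring ?_)
    simp [Polynomial.monomial_one_right_eq_X_pow, hR, h0]
  obtain ⟨m, hm, hp, hdvd⟩ := exists_period_dvd (H.t_pos hn₀) (H.data_periodic hn₀)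
  classical
  have hβ : ∀ n, α n * t n = 0 ↔ α n = 0 := fun n =>
    ⟨fun h => by
      by_contra hn
      exact (mul_ne_zero hn (Nat.cast_ne_zero.mpr (H.t_pos hn).ne')) h, fun h => by simp [h]⟩
  refine ⟨m, hm, fun b => if α b = 0 then 0 else t b / m, fun b => α b * t b, fun b _ => ?_⟩
  refine ⟨?_, fun a => ?_⟩
  · beta_reduce
    rw [hβ]
    by_cases hb : α b = 0
    · simp [hb]
    · have h := Nat.div_pos (Nat.le_of_dvd (H.t_pos hb) (hdvd _ (H.data_periodic hb))) hm
      simp only [hb, if_false, iff_false]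
      exact h.ne'
  · have hd : RBRel.data α t (m * a + b) = RBRel.data α t b := by
      have h := hp.nat_mul a b
      rwa [Nat.cast_id, mul_comm a m, add_comm b] at h
    simp only [RBRel.data, Prod.mk.injEq] at hd
    obtain ⟨hd1, hd2⟩ := hd
    beta_reduce
    refine ⟨fun hb => ?_, fun hb => ?_⟩
    · rw [hb, hβ] at hd1
      rw [hR, hd1, zero_smul]
    · have hc : α (m * a + b) ≠ 0 := fun h => hb (by rw [← hd1, h, zero_mul])
      have hb' : α b ≠ 0 := fun h => hb (by simp [h])
      rw [if_neg hc, if_neg hb'] at hd2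
      have ht : t (m * a + b) = m * (a + t b / m) := by
        rw [mul_add, Nat.mul_div_cancel' (hdvd _ (H.data_periodic hb'))]
        push_cast at hd2
        lia
      have htc : ((t (m * a + b) : ℕ) : K) ≠ 0 := Nat.cast_ne_zero.mpr (H.t_pos hc).ne'
      rw [hR, if_neg hb', ← ht, ← hd1, mul_div_cancel_right₀ _ htc]
end

section
/- Let R be a nontrivial monomial Rota–Baxter operator of nonzero weight λ on the polynomial algebra k[x] (nontrivial means R ≠ 0 and R ≠ −λ·id). Then there exists an algebra automorphism ψ of k[x] such that the conjugated operator ψ^{-1} ∘ R ∘ ψ is one of the following two splitting operators associated with the direct sum decomposition k[x] = k·1 ⊕ ⟨x⟩ (where ⟨x⟩ is the non-unital subalgebra of polynomials without constant term): either it sends every polynomial f to −λ·(f − f(0)), or it sends every polynomial f to −λ·f(0)·1. -/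
open Polynomial

/-!
Rescaling, `P = -lam⁻¹ • R` is a monomial Rota–Baxter operator of weight `-1`. Comparing exponents
in the identity for `u = v = 1` shows that `P 1` is `0` or `1`, and the identity with `u = 1` then
gives `P ∘ P = P`. Thus `P` is a projection whose kernel and image are closed under multiplication,
and whose image is spanned by monomials.

If `P (X ^ n)` is constant for every `n`, then either `P 1 = 0` and `P = 0`, or `P 1 = 1` and `P` is
evaluation at the point `a` with `P X = a`; translation by `a` moves it to evaluation at `0`.

Otherwise some `X ^ s` with `s ≥ 1` is fixed by `P`, and the core of the proof
(`RBMonomial.fixes_X_pow`) shows that `P` fixes every `X ^ n` with `n ≥ 1`. First, `P (X ^ n)` is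
never constant (`RBMonomial.not_const`): `P (X ^ n) = a` forces `P (X ^ (n * k)) = a ^ k`, against
`X ^ (n * s)` being fixed. So `P (X ^ n) = α X ^ t` with `α ≠ 0`, `t ≥ 1` and `X ^ t` fixed; suppose
`t ≠ n`. One shows by induction on `j ≥ 1` that `P (X ^ (a * n + b * t))` is a multiple of
`X ^ (j * t)` whenever `a + b = j` (`RBMonomial.level_step`). Were this to fail first at `j + 1`,
the Rota–Baxter identity together with monomiality would force
`P (X ^ (a * n + b * t)) = (-α) ^ a X ^ (j * t)` for `a + b = j`, and then the kernel element
`(X ^ n - α X ^ t) ^ j` would be mapped to `(-2 α) ^ j X ^ (j * t) ≠ 0`. Taking `j = a = t`, the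
fixed monomial `X ^ (t * n)` is a multiple of `X ^ (t * t)`, so `n = t`.
-/

namespace RBMonomial

variable {K : Type*} [Field K]

/-- A linear operator on `K[x]` that is Rota–Baxter of weight `-1`, idempotent, and monomial. -/
structure IsProj (P : K[X] →ₗ[K] K[X]) : Prop where
  rb : ∀ u v, P u * P v = P (P u * v + u * P v - u * v)
  idem : ∀ u, P (P u) = P u
  mono : ∀ n : ℕ, ∃ (α : K) (t : ℕ), P (X ^ n) = α • X ^ t

/-- A combination of two distinct monomials that is again monomial has a zero coefficient. -/
lemma eq_zero_or_of_monomial {p q δ : K} {r s e : ℕ} (hrs : r ≠ s)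
    (h : p • (X : K[X]) ^ r + q • X ^ s = δ • X ^ e) : p = 0 ∨ q = 0 := by
  have h1 := congrArg (fun f => coeff f r) h
  have h2 := congrArg (fun f => coeff f s) h
  simp only [coeff_add, coeff_smul, coeff_X_pow, smul_eq_mul] at h1 h2
  by_cases hr : r = e
  · right
    have : s ≠ e := fun h => hrs (hr.trans h.symm)
    simpa [hrs.symm, this] using h2
  · left
    simpa [hrs, hr] using h1

lemma smul_X_pow_inj {p q : K} {r s : ℕ} (hp : p ≠ 0)
    (h : p • (X : K[X]) ^ r = q • X ^ s) : r = s := by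
  by_contra hrs
  have h1 := congrArg (fun f => coeff f r) h
  simp [coeff_X_pow, hrs] at h1
  exact hp h1

variable {P : K[X] →ₗ[K] K[X]}

lemma IsProj.ker_mul (hP : IsProj P) {u v : K[X]} (hu : P u = 0) (hv : P v = 0) :
    P (u * v) = 0 := by
  have := hP.rb u v
  simpa [hu, hv] using this

lemma IsProj.ker_pow (hP : IsProj P) {u : K[X]} (hu : P u = 0) {j : ℕ} (hj : 1 ≤ j) :
    P (u ^ j) = 0 := by
  induction j, hj using Nat.le_induction with
  | base => simpa using hu
  | succ j _ ih => rw [pow_succ]; exact hP.ker_mul ih hu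

lemma IsProj.fix_pow (hP : IsProj P) {u : K[X]} (hu : P u = u) {j : ℕ} (hj : 1 ≤ j) :
    P (u ^ j) = u ^ j := by
  induction j, hj using Nat.le_induction with
  | base => simpa using hu
  | succ j _ ih =>
    have := hP.rb (u ^ j) u
    rw [ih, hu, add_sub_cancel_right] at this
    rw [pow_succ]; exact this.symm

lemma IsProj.const_pow (hP : IsProj P) {n : ℕ} {a : K} (h : P (X ^ n) = C a) {k : ℕ}
    (hk : 1 ≤ k) : P (X ^ (n * k)) = C (a ^ k) := by
  induction k, hk using Nat.le_induction with
  | base => simpa using h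
  | succ k _ ih =>
    have := hP.rb (X ^ n) (X ^ (n * k))
    rw [h, ih, ← pow_add, mul_comm (X ^ n), ← C_mul, map_sub, map_add, ← smul_eq_C_mul,
      ← smul_eq_C_mul, map_smul, map_smul, h, ih, smul_eq_C_mul, smul_eq_C_mul, ← C_mul,
      ← C_mul, mul_comm (a ^ k) a, ← pow_succ'] at this
    rw [Nat.mul_succ, add_comm (n * k)]
    linear_combination this

lemma not_const (hP : IsProj P) {s : ℕ} (hs : 1 ≤ s) (hfix : P (X ^ s) = X ^ s)
    {n : ℕ} (hn : 1 ≤ n) (a : K) : P (X ^ n) ≠ C a := by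
  intro h
  have h1 := hP.const_pow h hs
  have h2 := hP.fix_pow hfix hn
  rw [← pow_mul, mul_comm s n, h1] at h2
  have h3 := congrArg natDegree h2
  rw [natDegree_C, natDegree_X_pow] at h3
  have := Nat.mul_pos hn hs
  omega

lemma exists_monomial (hP : IsProj P) {s : ℕ} (hs : 1 ≤ s) (hfix : P (X ^ s) = X ^ s)
    {n : ℕ} (hn : 1 ≤ n) :
    ∃ (α : K) (t : ℕ), α ≠ 0 ∧ 1 ≤ t ∧ P (X ^ n) = α • X ^ t := by
  obtain ⟨α, t, h⟩ := hP.mono n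
  refine ⟨α, t, ?_, ?_, h⟩
  · rintro rfl
    exact not_const hP hs hfix hn 0 (by simpa using h)
  · by_contra ht
    obtain rfl : t = 0 := by omega
    exact not_const hP hs hfix hn α (by simpa [smul_eq_C_mul] using h)

/-- Applying `P` to the binomial expansion of the kernel element `(X ^ n - α X ^ t) ^ j` excludes
the coefficients `(-α) ^ a`. This is where characteristic zero enters. -/
lemma alternating_absurd [CharZero K] (hP : IsProj P) {n t j : ℕ} (hj : 1 ≤ j) {α : K} (hα : α ≠ 0)
    (hn : P (X ^ n) = α • X ^ t) (ht : P (X ^ t) = X ^ t)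
    (h : ∀ a ≤ j, P (X ^ (a * n + (j - a) * t)) = (-α) ^ a • X ^ (j * t)) : False := by
  have hu : P (X ^ n + (-α) • X ^ t) = 0 := by
    rw [map_add, map_smul, hn, ht, neg_smul, add_neg_cancel]
  have h1 := hP.ker_pow hu hj
  rw [add_pow, map_sum] at h1
  have h2 : ∀ m ∈ Finset.range (j + 1),
      P ((X ^ n) ^ m * ((-α) • X ^ t) ^ (j - m) * (j.choose m : K[X]))
        = ((j.choose m : K) * (-α) ^ j) • X ^ (j * t) := by
    intro m hm
    have hm : m ≤ j := by simpa [Nat.lt_succ_iff] using hm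
    have e : (X ^ n) ^ m * ((-α) • X ^ t) ^ (j - m) * (j.choose m : K[X])
        = ((j.choose m : K) * (-α) ^ (j - m)) • (X : K[X]) ^ (m * n + (j - m) * t) := by
      rw [_root_.smul_pow, pow_add, smul_eq_C_mul, smul_eq_C_mul, C_mul, ← C_eq_natCast]
      simp only [map_natCast]
      ring
    rw [e, map_smul, h m hm, smul_smul, mul_assoc, ← pow_add, Nat.sub_add_cancel hm]
  rw [Finset.sum_congr rfl h2, ← Finset.sum_smul, ← Finset.sum_mul] at h1
  have h3 : (∑ m ∈ Finset.range (j + 1), (j.choose m : K)) = 2 ^ j := by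
    exact_mod_cast congrArg (Nat.cast (R := K)) (Nat.sum_range_choose j)
  rw [h3] at h1
  have h4 : (2 : K) ^ j * (-α) ^ j ≠ 0 :=
    mul_ne_zero (pow_ne_zero _ two_ne_zero) (pow_ne_zero _ (neg_ne_zero.2 hα))
  rcases smul_eq_zero.1 h1 with h | h
  · exact h4 h
  · exact pow_ne_zero _ X_ne_zero h

lemma level_step [CharZero K] (hP : IsProj P) {n t j : ℕ} (hn1 : 1 ≤ n) (ht1 : 1 ≤ t)
    (hj : 1 ≤ j) {α : K} (hα : α ≠ 0)
    (hn : P (X ^ n) = α • X ^ t) (ht : P (X ^ t) = X ^ t)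
    (h : ∀ a ≤ j, ∃ g : K, P (X ^ (a * n + (j - a) * t)) = g • X ^ (j * t)) :
    ∀ a ≤ j + 1, ∃ g : K, P (X ^ (a * n + (j + 1 - a) * t)) = g • X ^ ((j + 1) * t) := by
  choose! g hg using h
  have hg0 : ∀ a ≤ j, g a ≠ 0 := by
    intro a ha h0
    have hpos : 1 ≤ a * n + (j - a) * t := by
      rcases Nat.eq_zero_or_pos a with rfl | ha'
      · have := Nat.mul_pos hj ht1
        simp; omega
      · have := Nat.mul_pos ha' hn1
        omega
    refine not_const hP ht1 ht hpos 0 ?_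
    rw [hg a ha, h0]; simp
  set c : ℕ → K[X] := fun a => P (X ^ (a * n + (j + 1 - a) * t)) with hc
  set M : K[X] := X ^ ((j + 1) * t) with hM
  have c0 : c 0 = M := by
    have := hP.fix_pow ht (j := j + 1) (by omega)
    simp only [hc, hM]
    rw [← pow_mul] at this
    simpa [mul_comm] using this
  -- The Rota–Baxter identity for `u = X ^ n` and `v = X ^ (a * n + (j - a) * t)`.
  have hrec : ∀ a ≤ j, c (a + 1) = α • c a + g a • c 1 - (α * g a) • M := by
    intro a ha
    have := hP.rb (X ^ n) (X ^ (a * n + (j - a) * t))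
    rw [hn, hg a ha, smul_mul_smul_comm, smul_mul_assoc, mul_smul_comm, ← pow_add, ← pow_add,
      ← pow_add, ← pow_add, map_sub, map_add, map_smul, map_smul] at this
    have e1 : t + (a * n + (j - a) * t) = a * n + (j + 1 - a) * t := by
      rw [Nat.sub_add_comm ha]; ring
    have e2 : n + j * t = 1 * n + (j + 1 - 1) * t := by simp
    have e3 : n + (a * n + (j - a) * t) = (a + 1) * n + (j + 1 - (a + 1)) * t := by
      rw [Nat.add_sub_add_right]; ring
    have e4 : t + j * t = (j + 1) * t := by ring
    rw [e1, e2, e3, e4] at this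
    simp only [hc, hM]
    rw [this]; abel
  obtain ⟨β, r, hβ⟩ : ∃ (β : K) (r : ℕ), c 1 = β • X ^ r := hP.mono _
  by_cases hgood : ∃ γ : K, c 1 = γ • M
  · obtain ⟨γ, hγ⟩ := hgood
    intro a
    change a ≤ j + 1 → ∃ g : K, c a = g • M
    induction a with
    | zero => exact fun _ => ⟨1, by rw [c0, one_smul]⟩
    | succ a ih =>
      intro ha
      obtain ⟨δ, hδ⟩ := ih (by omega)
      refine ⟨α * δ + g a * γ - α * g a, ?_⟩
      rw [hrec a (by omega), hδ, hγ, smul_smul, smul_smul, ← add_smul, ← sub_smul]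
  · exfalso
    have hβ0 : β ≠ 0 := by
      rintro rfl
      exact hgood ⟨0, by rw [hβ]; simp⟩
    have hr : r ≠ (j + 1) * t := by
      rintro rfl
      exact hgood ⟨β, hβ⟩
    -- The values `c a` alternate between multiples of `M` (even `a`) and of `c 1` (odd `a`);
    -- the sign of `(-1) ^ a` records the parity.
    have step : ∀ a ≤ j, (((-1 : K) ^ a = 1 ∧ c a = α ^ a • M) ∨
        ((-1 : K) ^ a = -1 ∧ α • c a = α ^ a • c 1)) → g a = (-α) ^ a ∧
        (((-1 : K) ^ (a + 1) = 1 ∧ c (a + 1) = α ^ (a + 1) • M) ∨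
        ((-1 : K) ^ (a + 1) = -1 ∧ α • c (a + 1) = α ^ (a + 1) • c 1)) := by
      intro a ha hT
      have hR := hrec a ha
      obtain ⟨δ, e, hδ⟩ : ∃ (δ : K) (e : ℕ), c (a + 1) = δ • X ^ e := hP.mono _
      rcases hT with ⟨hs, hca⟩ | ⟨hs, hca⟩
      · have h1 : c (a + 1) = g a • c 1 + (α * (α ^ a - g a)) • M := by
          rw [hR, hca]; module
        have h2 : (g a * β) • (X : K[X]) ^ r + (α * (α ^ a - g a)) • X ^ ((j + 1) * t)
            = δ • X ^ e := by
          rw [← hδ, h1, hβ, smul_smul]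
        have h3 : g a = α ^ a := by
          rcases eq_zero_or_of_monomial hr h2 with h | h
          · exact absurd h (mul_ne_zero (hg0 a ha) hβ0)
          · have := (mul_eq_zero.1 h).resolve_left hα
            linear_combination -this
        refine ⟨by rw [neg_pow, hs, one_mul, h3], Or.inr ⟨by rw [pow_succ, hs]; ring, ?_⟩⟩
        rw [h1, h3, sub_self, mul_zero, zero_smul, add_zero, smul_smul, ← pow_succ']
      · have h1 : c (a + 1) = (α ^ a + g a) • c 1 + (-(α * g a)) • M := by
          rw [hR, hca]; module
        have h2 : ((α ^ a + g a) * β) • (X : K[X]) ^ r + (-(α * g a)) • X ^ ((j + 1) * t)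
            = δ • X ^ e := by
          rw [← hδ, h1, hβ, smul_smul]
        have h3 : g a = -α ^ a := by
          rcases eq_zero_or_of_monomial hr h2 with h | h
          · have := (mul_eq_zero.1 h).resolve_right hβ0
            linear_combination this
          · exact absurd (neg_eq_zero.1 h) (mul_ne_zero hα (hg0 a ha))
        refine ⟨by rw [neg_pow, hs, h3]; ring, Or.inl ⟨by rw [pow_succ, hs]; ring, ?_⟩⟩
        rw [h1, h3, add_neg_cancel, zero_smul, zero_add]
        congr 1; ring
    have hT : ∀ a ≤ j, (((-1 : K) ^ a = 1 ∧ c a = α ^ a • M) ∨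
        ((-1 : K) ^ a = -1 ∧ α • c a = α ^ a • c 1)) := by
      intro a
      induction a with
      | zero => exact fun _ => Or.inl ⟨pow_zero _, by rw [c0, pow_zero, one_smul]⟩
      | succ a ih => exact fun ha => (step a (by omega) (ih (by omega))).2
    refine alternating_absurd hP hj hα hn ht fun a ha => ?_
    rw [hg a ha, (step a ha (hT a ha)).1]

lemma fixes_X_pow [CharZero K] (hP : IsProj P) {s : ℕ} (hs : 1 ≤ s) (hfix : P (X ^ s) = X ^ s)
    {n : ℕ} (hn1 : 1 ≤ n) : P (X ^ n) = X ^ n := by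
  obtain ⟨α, t, hα, ht1, hn⟩ := exists_monomial hP hs hfix hn1
  have ht : P (X ^ t) = X ^ t := by
    have := hP.idem (X ^ n)
    rw [hn, map_smul] at this
    exact smul_right_injective _ hα this
  have hlev : ∀ j, 1 ≤ j → ∀ a ≤ j, ∃ g : K,
      P (X ^ (a * n + (j - a) * t)) = g • X ^ (j * t) := by
    intro j hj
    induction j, hj using Nat.le_induction with
    | base =>
      intro a ha
      interval_cases a
      · exact ⟨1, by simpa using ht⟩
      · exact ⟨α, by simpa using hn⟩
    | succ j hj ih => exact level_step hP hn1 ht1 hj hα hn ht ih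
  obtain ⟨g, hg⟩ := hlev t ht1 t le_rfl
  have h1 := hP.fix_pow ht hn1
  rw [Nat.sub_self, zero_mul, add_zero, mul_comm t n, mul_comm n t, pow_mul, h1, ← pow_mul] at hg
  have h2 : t * n = t * t := smul_X_pow_inj (one_ne_zero (α := K)) (by rw [one_smul]; exact hg)
  rw [← Nat.eq_of_mul_eq_mul_left ht1 h2] at ht
  exact ht

end RBMonomial

open RBMonomial

theorem nontrivial_monomial_RB_nonzero_weight_on_kx
    {K : Type*} [Field K] [CharZero K] (lam : K) (hlam : lam ≠ 0)
    (R : Polynomial K →ₗ[K] Polynomial K)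
    (hRB : ∀ u v : Polynomial K,
      R u * R v = R (R u * v + u * R v + lam • (u * v)))
    (hmono : ∀ n : ℕ, ∃ (α : K) (t : ℕ), R (X ^ n) = α • X ^ t)
    (hne0 : R ≠ 0) (hneid : R ≠ -lam • LinearMap.id) :
    ∃ ψ : Polynomial K ≃ₐ[K] Polynomial K,
      (∀ f : Polynomial K, ψ.symm (R (ψ f)) = -lam • (f - C (f.coeff 0))) ∨
      (∀ f : Polynomial K, ψ.symm (R (ψ f)) = -lam • C (f.coeff 0)) := by
  obtain ⟨P, rfl⟩ : ∃ P : K[X] →ₗ[K] K[X], R = -lam • P :=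
    ⟨(-lam)⁻¹ • R, by rw [smul_smul, mul_inv_cancel₀ (neg_ne_zero.2 hlam), one_smul]⟩
  have hl : -lam ≠ 0 := neg_ne_zero.2 hlam
  have rb : ∀ u v, P u * P v = P (P u * v + u * P v - u * v) := by
    intro u v
    have h := hRB u v
    simp only [LinearMap.smul_apply] at h
    have e : (-lam • P u) * v + u * (-lam • P v) + lam • (u * v)
        = -lam • (P u * v + u * P v - u * v) := by
      rw [smul_mul_assoc, mul_smul_comm]; module
    rw [e, map_smul, smul_mul_assoc, mul_smul_comm] at h
    exact smul_right_injective _ hl (smul_right_injective _ hl h)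
  have mono : ∀ n : ℕ, ∃ (α : K) (t : ℕ), P (X ^ n) = α • X ^ t := by
    intro n
    obtain ⟨α, t, h⟩ := hmono n
    refine ⟨(-lam)⁻¹ * α, t, ?_⟩
    rw [mul_smul, ← h, LinearMap.smul_apply, smul_smul, inv_mul_cancel₀ hl, one_smul]
  have hP1 : P 1 = 0 ∨ P 1 = 1 := by
    obtain ⟨α, t, h⟩ := mono 0
    rw [pow_zero] at h
    by_cases hα : α = 0
    · left; rw [h, hα, zero_smul]
    right
    have h1 := rb 1 1
    rw [mul_one, one_mul, map_sub, map_add, mul_one, h, map_smul] at h1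
    obtain ⟨β, e, hβ⟩ := mono t
    have h2 : α • (X : K[X]) ^ (t + t) + (1 : K) • X ^ t = (2 * β) • X ^ e := by
      have h3 : α • (α • (X : K[X]) ^ (t + t) + (1 : K) • X ^ t) = α • (2 : K) • P (X ^ t) := by
        rw [smul_mul_smul_comm, ← pow_add] at h1
        rw [smul_add, smul_smul, h1]; module
      rw [smul_right_injective _ hα h3, hβ, smul_smul]
    obtain rfl : t = 0 := by
      by_contra ht
      rcases eq_zero_or_of_monomial (by omega) h2 with h | h
      · exact hα h
      · exact one_ne_zero h
    have h4 : P 1 = C α := by rw [h, pow_zero, smul_eq_C_mul, mul_one]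
    rw [pow_zero, h4] at h1
    simp only [smul_eq_C_mul, mul_one, ← C_mul, ← C_add, ← C_sub] at h1
    have h5 := C_injective h1
    have h6 : α * (α - 1) = 0 := by linear_combination -h5
    rw [h4, sub_eq_zero.1 ((mul_eq_zero.1 h6).resolve_left hα), C_1]
  have idem : ∀ u, P (P u) = P u := by
    intro u
    have h := rb 1 u
    rcases hP1 with h1 | h1
    · rw [h1, zero_mul, zero_mul, one_mul, one_mul, zero_add, map_sub] at h
      exact (sub_eq_zero.1 h.symm)
    · rw [h1, one_mul, one_mul, add_sub_cancel_left] at h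
      exact h.symm
  have hP : IsProj P := ⟨rb, idem, mono⟩
  by_cases hs : ∃ s, 1 ≤ s ∧ P (X ^ s) = X ^ s
  · obtain ⟨s, hs, hfix⟩ := hs
    have hall : ∀ n, 1 ≤ n → P (X ^ n) = X ^ n := fun n hn => fixes_X_pow hP hs hfix hn
    rcases hP1 with h1 | h1
    · refine ⟨AlgEquiv.refl, Or.inl fun f => ?_⟩
      change -lam • P f = _
      congr 1
      induction f using Polynomial.induction_on' with
      | add p q hp hq => rw [map_add, hp, hq, coeff_add, C_add]; ring
      | monomial n a =>
        rw [← smul_X_eq_monomial, map_smul]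
        rcases Nat.eq_zero_or_pos n with rfl | hn
        · simp [h1, smul_eq_C_mul]
        · rw [hall n hn]; simp [coeff_X_pow, hn.ne]
    · refine absurd ?_ hneid
      congr 1
      ext1 n
      ext1
      rcases Nat.eq_zero_or_pos n with rfl | hn
      · simp [h1]
      · simp only [LinearMap.comp_apply, monomial_one_right_eq_X_pow, hall n hn, LinearMap.id_apply]
  · have hconst : ∀ n, ∃ a : K, P (X ^ n) = C a := by
      -- A value `α X ^ t` with `α ≠ 0` makes `X ^ t` a fixed point, hence `t = 0`.
      intro n
      obtain ⟨α, t, h⟩ := mono n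
      by_cases hα : α = 0
      · exact ⟨0, by rw [h, hα]; simp⟩
      rcases Nat.eq_zero_or_pos t with rfl | ht
      · exact ⟨α, by rw [h]; simp [smul_eq_C_mul]⟩
      · refine absurd ⟨t, ht, ?_⟩ hs
        have := idem (X ^ n)
        rw [h, map_smul] at this
        exact smul_right_injective _ hα this
    rcases hP1 with h1 | h1
    · refine absurd ?_ hne0
      have : P = 0 := by
        ext1 n
        ext1
        obtain ⟨a, ha⟩ := hconst n
        have := idem (X ^ n)
        rw [ha, ← mul_one (C a), ← smul_eq_C_mul, map_smul, h1, smul_zero, smul_eq_C_mul,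
          mul_one] at this
        simp only [LinearMap.comp_apply, monomial_one_right_eq_X_pow, ha, ← this]
        simp
      rw [this, smul_zero]
    · obtain ⟨a, ha⟩ := hconst 1
      have hev : ∀ f, P f = C (f.eval a) := by
        intro f
        induction f using Polynomial.induction_on' with
        | add p q hp hq => rw [map_add, hp, hq, eval_add, C_add]
        | monomial n b =>
          rw [← smul_X_eq_monomial, map_smul]
          rcases Nat.eq_zero_or_pos n with rfl | hn
          · simp [h1, smul_eq_C_mul]
          · have := hP.const_pow ha hn
            rw [one_mul] at this
            rw [this]; simp [smul_eq_C_mul]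
      refine ⟨algEquivAevalXAddC (-a), Or.inr fun f => ?_⟩
      rw [LinearMap.smul_apply, map_smul, hev]
      congr 1
      have e : eval a (algEquivAevalXAddC (-a) f) = f.coeff 0 := by
        rw [algEquivAevalXAddC_apply, ← comp_eq_aeval, eval_comp, coeff_zero_eq_eval_zero]
        simp
      rw [e]
      exact AlgEquiv.commutes _ _
end

section
/- Let R be an injective monomial Rota–Baxter operator of weight 1 on the polynomial algebra k[x_1, …, x_n]. Then R = −id. -/
open MvPolynomial

/-!
Everything reduces to `R 1 = -1`: taking `v = 1` in the Rota–Baxter identity then gives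
`-R u = R (R u)`, and injectivity yields `R u = -u`.

To compute `R 1 = α x^t`, take `u = v = 1`, which reads `(R 1)² = 2 R (R 1) + R 1`. Writing
`R (x^t) = β x^s`, this is `α² x^{2t} = 2αβ x^s + α x^t` with `α ≠ 0`. If `t ≠ 0`, comparing
coefficients at `x^t` forces `s = t`, and the coefficient at `x^{2t}` then gives `α² = 0`, which is
absurd. Hence `t = 0`, `R 1 = α`, and `α² = 2α² + α` gives `α = -1`.
-/

/- STATEMENT 5.  (Corollary 4 of the paper.)
An injective monomial Rota–Baxter operator of weight 1 on the (unital) polynomial algebra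
`K[x_1, …, x_n]` (over a field `K` of characteristic zero) equals `-id`.
Monomials are `monomial i 1` for `i : Fin n →₀ ℕ` (including `i = 0`, i.e. the constant 1). -/
theorem injective_monomial_RB_weight_one_on_kX
    {K : Type*} [Field K] [CharZero K] (n : ℕ)
    (R : MvPolynomial (Fin n) K →ₗ[K] MvPolynomial (Fin n) K)
    (hRB : ∀ u v : MvPolynomial (Fin n) K,
      R u * R v = R (R u * v + u * R v + u * v))
    (hinj : Function.Injective R)
    (hmono : ∀ i : Fin n →₀ ℕ, ∃ (α : K) (t : Fin n →₀ ℕ),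
      R (monomial i (1 : K)) = α • monomial t (1 : K)) :
    ∀ p : MvPolynomial (Fin n) K, R p = -p := by
  have key : R 1 = -1 := by
    obtain ⟨α, t, ht⟩ := hmono 0
    obtain ⟨β, s, hs⟩ := hmono t
    have h1 : R 1 = α • monomial t (1 : K) := ht
    have hα : α ≠ 0 := by
      rintro rfl
      exact one_ne_zero (hinj (by rw [h1, zero_smul, map_zero]))
    have h := hRB 1 1
    simp only [mul_one, one_mul, map_add] at h
    by_cases h0 : t = 0
    · subst h0
      have h2 : R 1 = α • (1 : MvPolynomial (Fin n) K) := h1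
      simp only [h2, map_smul] at h
      have hc := congrArg (coeff 0) h
      simp [MvPolynomial.smul_eq_C_mul] at hc
      have : α = -1 := by
        have : α * (α + 1) = 0 := by linear_combination -hc
        rcases mul_eq_zero.1 this with h | h
        · exact absurd h hα
        · exact eq_neg_of_add_eq_zero_left h
      rw [h2, this, neg_one_smul]
    · exfalso
      simp only [h1, map_smul, hs, smul_mul_smul_comm, monomial_mul, mul_one] at h
      have hc := congrArg (coeff t) h
      have hd := congrArg (coeff (t + t)) h
      by_cases hst : s = t
      · subst hst
        simp [coeff_monomial, hα, h0] at hd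
      · simp [coeff_monomial, hst, h0] at hc
        exact hα hc.symm
  intro p
  have h := hRB p 1
  rw [key] at h
  apply hinj
  rw [map_neg, ← mul_neg_one, h]
  congr 1
  ring
end

section
/- Let λ ∈ k be nonzero and let r ∈ k[x] ⊗ k[x] be a solution of the associative Yang–Baxter equation of weight λ, i.e., r_{13}r_{12} − r_{12}r_{23} + r_{23}r_{13} = λ r_{13} holds in k[x] ⊗ k[x] ⊗ k[x]. Then r = 0 or r = λ(1 ⊗ 1). -/
/-!
Write `r` as a polynomial `f(x, y)`, so that the equation reads
`f(x,z) f(x,y) - f(x,y) f(y,z) + f(y,z) f(x,z) = lam f(x,z)`. Setting `y = x`, that is, applying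
the algebra map `(A ⊗ A) ⊗ A → A ⊗ A` that multiplies the first two factors, cancels the first two
terms and leaves `f(x,z)² = lam f(x,z)`. As `K[x] ⊗ K[x] ≅ K[x][y]` is a domain, `f = 0` or
`f = lam`.
-/

open Polynomial TensorProduct

/-- For `r ∈ A ⊗ A`, the element `r₁₂ = Σ aᵢ ⊗ bᵢ ⊗ 1` of `(A ⊗ A) ⊗ A`, `A = K[x]`. -/
noncomputable def ayb12 {K : Type*} [Field K]
    (r : Polynomial K ⊗[K] Polynomial K) :
    (Polynomial K ⊗[K] Polynomial K) ⊗[K] Polynomial K :=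
  Algebra.TensorProduct.includeLeft (R := K) (S := K) r

/-- For `r ∈ A ⊗ A`, the element `r₁₃ = Σ aᵢ ⊗ 1 ⊗ bᵢ` of `(A ⊗ A) ⊗ A`, `A = K[x]`. -/
noncomputable def ayb13 {K : Type*} [Field K]
    (r : Polynomial K ⊗[K] Polynomial K) :
    (Polynomial K ⊗[K] Polynomial K) ⊗[K] Polynomial K :=
  Algebra.TensorProduct.map
    (Algebra.TensorProduct.includeLeft (R := K) (S := K) (B := Polynomial K))
    (AlgHom.id K (Polynomial K)) r

/-- For `r ∈ A ⊗ A`, the element `r₂₃ = Σ 1 ⊗ aᵢ ⊗ bᵢ` of `(A ⊗ A) ⊗ A`, `A = K[x]`. -/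
noncomputable def ayb23 {K : Type*} [Field K]
    (r : Polynomial K ⊗[K] Polynomial K) :
    (Polynomial K ⊗[K] Polynomial K) ⊗[K] Polynomial K :=
  Algebra.TensorProduct.map
    (Algebra.TensorProduct.includeRight (R := K) (A := Polynomial K))
    (AlgHom.id K (Polynomial K)) r

/-- The algebra map `a ⊗ b ⊗ c ↦ ab ⊗ c`, i.e. the specialization `y = x`. -/
noncomputable def mergeFirstTwo (K : Type*) [Field K] :
    (Polynomial K ⊗[K] Polynomial K) ⊗[K] Polynomial K →ₐ[K] Polynomial K ⊗[K] Polynomial K :=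
  Algebra.TensorProduct.map (Algebra.TensorProduct.lmul' K) (AlgHom.id K (Polynomial K))

lemma mergeFirstTwo_ayb13 {K : Type*} [Field K] (r : Polynomial K ⊗[K] Polynomial K) :
    mergeFirstTwo K (ayb13 r) = r := by
  induction r with
  | zero => simp [ayb13]
  | tmul a b => simp [ayb13, mergeFirstTwo]
  | add a b ha hb => simp only [ayb13, map_add] at *; rw [ha, hb]

lemma mergeFirstTwo_ayb23 {K : Type*} [Field K] (r : Polynomial K ⊗[K] Polynomial K) :
    mergeFirstTwo K (ayb23 r) = r := by
  induction r with
  | zero => simp [ayb23]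
  | tmul a b => simp [ayb23, mergeFirstTwo]
  | add a b ha hb => simp only [ayb23, map_add] at *; rw [ha, hb]

theorem AYBE_nonzero_weight_on_kx
    {K : Type*} [Field K] [CharZero K] (lam : K) (hlam : lam ≠ 0)
    (r : Polynomial K ⊗[K] Polynomial K)
    (hAYB : ayb13 r * ayb12 r - ayb12 r * ayb23 r + ayb23 r * ayb13 r
      = lam • ayb13 r) :
    r = 0 ∨ r = lam • ((1 : Polynomial K) ⊗ₜ[K] (1 : Polynomial K)) := by
  have h := congrArg (mergeFirstTwo K) hAYB
  simp only [map_add, map_sub, map_mul, map_smul, mergeFirstTwo_ayb13, mergeFirstTwo_ayb23] at h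
  have : NoZeroDivisors (Polynomial K ⊗[K] Polynomial K) :=
    (polyEquivTensor K (Polynomial K)).symm.injective.noZeroDivisors _ (map_zero _) (map_mul _)
  have hr : r * (r - lam • ((1 : Polynomial K) ⊗ₜ[K] (1 : Polynomial K))) = 0 := by
    rw [← Algebra.TensorProduct.one_def, mul_sub, mul_smul_comm, mul_one, ← h]
    ring
  exact (mul_eq_zero.mp hr).imp_right sub_eq_zero.mp
end

section
/- Let A be a finite-dimensional algebra over an algebraically closed field k, R a Rota–Baxter operator of weight 1 on A, and λ, μ ∈ k nonzero. Let A_λ and A_μ denote the generalized eigenspaces of R for λ and μ. If λ + μ = −1, then uv = 0 for all u ∈ A_λ, v ∈ A_μ. If λ + μ ≠ −1, then uv lies in the generalized eigenspace of R for λ∘μ = λμ/(λ+μ+1) for all u ∈ A_λ, v ∈ A_μ (in particular, uv = 0 when λ∘μ is not an eigenvalue of R). -/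
/-!
Write `R u = lam • u + u'` and `R v = mu • v + v'`, where `u'` and `v'` are annihilated by one
power less of `R - lam` and `R - mu`. With `s = lam + mu + 1`, expanding the Rota–Baxter identity
at `(u, v)` gives

`(lam * mu) • (u * v) - s • R (u * v)
  = R (u' * v + u * v') - lam • (u * v') - mu • (u' * v) - u' * v'`.

By induction on the two nilpotency orders, every product on the right may be assumed to lie in a
given `R`-invariant subspace `W`, so `u * v` lies in `W` as soon as
`(lam * mu) • x - s • R x ∈ W` implies `x ∈ W` (`mul_mem_of_pow_apply_eq_zero`). If `s = 0` this
applies to `W = ⊥`, since `lam * mu ≠ 0`; if `s ≠ 0` it applies to the generalized eigenspace of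
`R` for `lam * mu / s`.
-/

/-- The induction common to both cases: `W` is an `R`-invariant subspace such that
`lam * mu - (lam + mu + 1) R` is injective on the quotient `A / W`. -/
theorem mul_mem_of_pow_apply_eq_zero
    {K : Type*} [Field K]
    {A : Type*} [NonUnitalNonAssocRing A] [Module K A]
    [SMulCommClass K A A] [IsScalarTower K A A]
    (R : A →ₗ[K] A)
    (hRB : ∀ u v : A, R u * R v = R (R u * v + u * R v + u * v))
    (lam mu : K) (W : Submodule K A) (hRW : ∀ x ∈ W, R x ∈ W)
    (hW : ∀ x : A, (lam * mu) • x - (lam + mu + 1) • R x ∈ W → x ∈ W)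
    (i : ℕ) (u : A) (hu : ((R - lam • (1 : Module.End K A)) ^ i) u = 0)
    (j : ℕ) (v : A) (hv : ((R - mu • (1 : Module.End K A)) ^ j) v = 0) :
    u * v ∈ W := by
  induction i generalizing u j v with
  | zero =>
    have hu0 : u = 0 := by simpa using hu
    simp [hu0]
  | succ i ihi =>
    induction j generalizing v with
    | zero =>
      have hv0 : v = 0 := by simpa using hv
      simp [hv0]
    | succ j ihj =>
      obtain ⟨u', hu'⟩ : ∃ u', u' = (R - lam • (1 : Module.End K A)) u := ⟨_, rfl⟩
      obtain ⟨v', hv'⟩ : ∃ v', v' = (R - mu • (1 : Module.End K A)) v := ⟨_, rfl⟩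
      have hRu : R u = lam • u + u' := by simp [hu']
      have hRv : R v = mu • v + v' := by simp [hv']
      have hu'_pow : ((R - lam • (1 : Module.End K A)) ^ i) u' = 0 := by
        rw [hu', ← Module.End.mul_apply, ← pow_succ, hu]
      have hv'_pow : ((R - mu • (1 : Module.End K A)) ^ j) v' = 0 := by
        rw [hv', ← Module.End.mul_apply, ← pow_succ, hv]
      have h₁ : u' * v ∈ W := ihi u' hu'_pow (j + 1) v hv
      have h₂ : u' * v' ∈ W := ihi u' hu'_pow j v' hv'_pow
      have h₃ : u * v' ∈ W := ihj v' hv'_pow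
      apply hW
      have key : (lam * mu) • (u * v) - (lam + mu + 1) • R (u * v)
          = R (u' * v + u * v') - lam • (u * v') - mu • (u' * v) - u' * v' := by
        have h := hRB u v
        rw [hRu, hRv] at h
        simp only [add_mul, mul_add, smul_mul_assoc, mul_smul_comm, map_add, map_smul] at h
        rw [map_add]
        linear_combination (norm := module) (1 : K) • h
      rw [key]
      exact W.sub_mem (W.sub_mem (W.sub_mem (hRW _ (W.add_mem h₁ h₃)) (W.smul_mem _ h₃))
        (W.smul_mem _ h₁)) h₂

/- STATEMENT 8.  (Proposition 2 of the paper.)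
`A` is a finite-dimensional, not necessarily associative, not necessarily unital algebra
over an algebraically closed field `K` (a `K`-module with `K`-bilinear multiplication),
`R` is a Rota–Baxter operator of weight 1 on `A`, and `lam, mu` are nonzero scalars.
`Module.End.maxGenEigenspace R lam = ⋃_j ker((R - lam·id)^j)` is the generalized
eigenspace of `R` for `lam`.  If `lam + mu = -1` then `u * v = 0`; otherwise `u * v` lies
in the generalized eigenspace for `lam ∘ mu = lam·mu/(lam+mu+1)` (in particular `u*v = 0`
when `lam ∘ mu` is not an eigenvalue of `R`). -/
theorem RB_weight_one_maxGenEigenspace_mul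
    {K : Type*} [Field K] [IsAlgClosed K]
    {A : Type*} [NonUnitalNonAssocRing A] [Module K A]
    [SMulCommClass K A A] [IsScalarTower K A A] [FiniteDimensional K A]
    (R : A →ₗ[K] A)
    (hRB : ∀ u v : A, R u * R v = R (R u * v + u * R v + u * v))
    (lam mu : K) (hlam : lam ≠ 0) (hmu : mu ≠ 0)
    (u v : A) (hu : u ∈ Module.End.maxGenEigenspace R lam)
    (hv : v ∈ Module.End.maxGenEigenspace R mu) :
    (lam + mu = -1 → u * v = 0) ∧
    (lam + mu ≠ -1 →
      u * v ∈ Module.End.maxGenEigenspace R (lam * mu / (lam + mu + 1))) ∧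
    (lam + mu ≠ -1 → ¬ Module.End.HasEigenvalue R (lam * mu / (lam + mu + 1)) →
      u * v = 0) := by
  obtain ⟨i, hi⟩ := Module.End.mem_maxGenEigenspace R lam u |>.mp hu
  obtain ⟨j, hj⟩ := Module.End.mem_maxGenEigenspace R mu v |>.mp hv
  have hmem : lam + mu ≠ -1 →
      u * v ∈ Module.End.maxGenEigenspace R (lam * mu / (lam + mu + 1)) := by
    intro hne
    have hs : lam + mu + 1 ≠ 0 := fun h => hne (eq_neg_of_add_eq_zero_left h)
    refine mul_mem_of_pow_apply_eq_zero R hRB lam mu _ ?_ ?_ i u hi j v hj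
    · exact fun x hx => Module.End.mapsTo_maxGenEigenspace_of_comm (Commute.refl R) _ hx
    · intro x hx
      -- With `s = lam + mu + 1`, scaling `hx` by `-s⁻¹` gives membership of `(R - lam * mu / s) x`.
      have hx' := Submodule.smul_mem _ (-(lam + mu + 1)⁻¹) hx
      obtain ⟨n, hn⟩ := (Module.End.mem_maxGenEigenspace R _ _).mp hx'
      refine (Module.End.mem_maxGenEigenspace R _ _).mpr ⟨n + 1, ?_⟩
      rw [pow_succ, Module.End.mul_apply, ← hn]
      congr 1
      simp only [LinearMap.sub_apply, LinearMap.smul_apply, Module.End.one_apply, smul_sub,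
        smul_smul]
      rw [neg_mul, neg_mul, inv_mul_cancel₀ hs, div_eq_inv_mul]
      module
  refine ⟨fun h => ?_, hmem, fun hne hev => ?_⟩
  · have hs : lam + mu + 1 = 0 := by rw [h]; ring
    have := mul_mem_of_pow_apply_eq_zero R hRB lam mu ⊥ (by simp)
      (by simp [hs, hlam, hmu]) i u hi j v hj
    simpa using this
  · by_contra h0
    -- A nonzero generalized eigenspace forces an eigenvector.
    have hgen : Module.End.HasUnifEigenvalue R (lam * mu / (lam + mu + 1)) ⊤ :=
      (Submodule.ne_bot_iff _).mpr ⟨u * v, hmem hne, h0⟩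
    exact hev (hgen.lt one_pos)
end

section
/- Let A be a finite-dimensional algebra over an algebraically closed field k, R a Rota–Baxter operator of weight 0 on A, and λ, μ ∈ k nonzero. Let A_λ and A_μ denote the generalized eigenspaces of R for λ and μ. If λ + μ = 0, then uv = 0 for all u ∈ A_λ, v ∈ A_μ. If λ + μ ≠ 0, then uv lies in the generalized eigenspace of R for λ∗μ = λμ/(λ+μ) for all u ∈ A_λ, v ∈ A_μ (in particular, uv = 0 when λ∗μ is not an eigenvalue of R). -/
/-!
Write `N = R - lam` and `M = R - mu`. Substituting `R u = lam • u + N u` and `R v = mu • v + M v`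
into the Rota–Baxter identity gives
`(lam + mu) • R (u * v) - (lam * mu) • (u * v)
  = lam • (u * M v) + mu • (N u * v) + N u * M v - R (N u * v + u * M v)`.
All products on the right have a smaller total nilpotency index with respect to `(N, M)`. Hence, by
induction, `u * v` lies in every `R`-stable subspace `W` that contains `x` as soon as it contains
`(lam + mu) • R x - (lam * mu) • x` (`mul_mem_of_RB`). The three claims are the cases `W = ⊥`,
`W` the generalized eigenspace for `lam * mu / (lam + mu)`, and `W = ⊥` again.
-/

/-- The induction on the total nilpotency index, for an arbitrary `R`-stable subspace `W` on whose
quotient `(lam + mu) • R - lam * mu` is injective. -/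
lemma mul_mem_of_RB {K A : Type*} [Field K] [NonUnitalNonAssocRing A] [Module K A]
    [SMulCommClass K A A] [IsScalarTower K A A] (R : A →ₗ[K] A)
    (hRB : ∀ u v : A, R u * R v = R (R u * v + u * R v)) (lam mu : K) (W : Submodule K A)
    (hR : ∀ x ∈ W, R x ∈ W)
    (hW : ∀ x, (lam + mu) • R x - (lam * mu) • x ∈ W → x ∈ W)
    (u v : A) (hu : u ∈ Module.End.maxGenEigenspace R lam)
    (hv : v ∈ Module.End.maxGenEigenspace R mu) : u * v ∈ W := by
  have key : ∀ (s m n : ℕ) (u v : A), m + n ≤ s →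
      ((R - lam • (1 : Module.End K A)) ^ m) u = 0 →
      ((R - mu • (1 : Module.End K A)) ^ n) v = 0 → u * v ∈ W := by
    intro s
    induction s with
    | zero =>
      intro m n u v hs hm hn
      obtain rfl : m = 0 := by omega
      obtain rfl : u = 0 := by simpa using hm
      simp
    | succ s ih =>
      intro m n u v hs hm hn
      rcases m with _ | m
      · obtain rfl : u = 0 := by simpa using hm
        simp
      rcases n with _ | n
      · obtain rfl : v = 0 := by simpa using hn
        simp
      have hm' : ((R - lam • (1 : Module.End K A)) ^ m) (R u - lam • u) = 0 := by
        simpa [pow_succ] using hm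
      have hn' : ((R - mu • (1 : Module.End K A)) ^ n) (R v - mu • v) = 0 := by
        simpa [pow_succ] using hn
      have h1 := ih m (n + 1) _ v (by omega) hm' hn
      have h2 := ih (m + 1) n u _ (by omega) hm hn'
      have h3 := ih m n _ _ (by omega) hm' hn'
      apply hW
      have e : (lam + mu) • R (u * v) - (lam * mu) • (u * v)
          = lam • (u * (R v - mu • v)) + mu • ((R u - lam • u) * v)
            + (R u - lam • u) * (R v - mu • v)
            - R ((R u - lam • u) * v + u * (R v - mu • v)) := by
        have h := hRB u v
        simp only [map_add] at h
        simp only [mul_sub, sub_mul, map_add, map_sub, map_smul, smul_mul_assoc,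
          mul_smul_comm, h]
        module
      rw [e]
      exact W.sub_mem (W.add_mem (W.add_mem (W.smul_mem _ h2) (W.smul_mem _ h1)) h3)
        (hR _ (W.add_mem h1 h2))
  rw [Module.End.mem_maxGenEigenspace] at hu hv
  obtain ⟨m, hm⟩ := hu
  obtain ⟨n, hn⟩ := hv
  exact key _ m n u v le_rfl hm hn

/- STATEMENT 9.  (Proposition 3 of the paper.)
`A` is a finite-dimensional, not necessarily associative, not necessarily unital algebra
over an algebraically closed field `K`, `R` is a Rota–Baxter operator of weight 0 on `A`,
and `lam, mu` are nonzero scalars.  If `lam + mu = 0` then `u * v = 0`; otherwise `u * v`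
lies in the generalized eigenspace (`Module.End.maxGenEigenspace`) of `R` for
`lam ∗ mu = lam·mu/(lam+mu)` (in particular `u*v = 0` when `lam ∗ mu` is not an
eigenvalue of `R`). -/
theorem RB_weight_zero_maxGenEigenspace_mul
    {K : Type*} [Field K] [IsAlgClosed K]
    {A : Type*} [NonUnitalNonAssocRing A] [Module K A]
    [SMulCommClass K A A] [IsScalarTower K A A] [FiniteDimensional K A]
    (R : A →ₗ[K] A)
    (hRB : ∀ u v : A, R u * R v = R (R u * v + u * R v))
    (lam mu : K) (hlam : lam ≠ 0) (hmu : mu ≠ 0)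
    (u v : A) (hu : u ∈ Module.End.maxGenEigenspace R lam)
    (hv : v ∈ Module.End.maxGenEigenspace R mu) :
    (lam + mu = 0 → u * v = 0) ∧
    (lam + mu ≠ 0 →
      u * v ∈ Module.End.maxGenEigenspace R (lam * mu / (lam + mu))) ∧
    (lam + mu ≠ 0 → ¬ Module.End.HasEigenvalue R (lam * mu / (lam + mu)) →
      u * v = 0) := by
  -- When `lam + mu ≠ 0`, the operator `(lam + mu) • R - lam * mu` is a multiple of `R - lam ∗ mu`.
  have hdiv : lam + mu ≠ 0 → ∀ x, (lam + mu) • R x - (lam * mu) • x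
      = (lam + mu) • (R x - (lam * mu / (lam + mu)) • x) := by
    intro h x
    rw [smul_sub, smul_smul, mul_div_cancel₀ _ h]
  refine ⟨fun h => ?_, fun h => ?_, fun h hne => ?_⟩
  · rw [← Submodule.mem_bot K]
    refine mul_mem_of_RB R hRB lam mu ⊥ (by simp) (fun x hx => ?_) u v hu hv
    simpa [h, hlam, hmu] using hx
  · refine mul_mem_of_RB R hRB lam mu _ (fun x hx => ?_) (fun x hx => ?_) u v hu hv
    · exact Module.End.mapsTo_maxGenEigenspace_of_comm (Commute.refl R) _ hx
    · rw [hdiv h, Submodule.smul_mem_iff _ h, Module.End.mem_maxGenEigenspace] at hx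
      obtain ⟨k, hk⟩ := hx
      rw [Module.End.mem_maxGenEigenspace]
      exact ⟨k + 1, by simpa [pow_succ] using hk⟩
  · rw [← Submodule.mem_bot K]
    refine mul_mem_of_RB R hRB lam mu ⊥ (by simp) (fun x hx => ?_) u v hu hv
    rw [hdiv h, Submodule.smul_mem_iff _ h, Submodule.mem_bot, sub_eq_zero] at hx
    by_contra hx0
    exact hne (Module.End.hasEigenvalue_of_hasEigenvector
      (Module.End.hasEigenvector_iff.mpr ⟨Module.End.mem_eigenspace_iff.mpr hx, by simpa using hx0⟩))
end

section
/- Let A be a unital associative algebra over a field k and P a Rota–Baxter operator of weight λ on A with λ ≠ 0. If P(1) is a scalar multiple of 1, then P(1) = 0 or P(1) = −λ·1, and P is splitting: A decomposes as a vector-space direct sum A = ker(P) ⊕ ker(P + λ·id) of two subalgebras, with P acting as 0 on the first summand and as −λ·id on the second. -/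
/-!
With `P 1 = c • 1`, the Rota–Baxter identity at `u = 1` reads
`c • P v = c • P v + P (P v) + lam • P v`, so `P ∘ (P + lam) = 0`. Since `lam ≠ 0`, the coprime
factors `X` and `X + lam` give the splitting `x = lam⁻¹ • (P x + lam • x) + (-lam⁻¹) • P x`;
evaluating at `1` gives `c (c + lam) • 1 = 0`. The kernels are closed under multiplication by
the Rota–Baxter identity applied to two elements of the same kernel.
-/


/- STATEMENT 13.  (Lemma 3a of the paper.)
Let `P` be a Rota–Baxter operator of weight `lam ≠ 0` on a unital associative algebra `A`
over a field `K`.  If `P 1` is a scalar multiple of `1`, then `P 1 = 0` or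
`P 1 = -lam • 1`, and `P` is splitting: `A = ker P ⊕ ker (P + lam·id)` as a vector space,
both summands are subalgebras (closed under multiplication), and `P` acts as `0` on the
first summand and as `-lam • id` on the second. -/
theorem RB_unital_P1_scalar_splitting
    {K : Type*} [Field K]
    {A : Type*} [Ring A] [Algebra K A]
    (lam : K) (hlam : lam ≠ 0)
    (P : A →ₗ[K] A)
    (hRB : ∀ u v : A, P u * P v = P (P u * v + u * P v + lam • (u * v)))
    (h1 : ∃ c : K, P 1 = c • (1 : A)) :
    (P 1 = 0 ∨ P 1 = -lam • (1 : A)) ∧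
    IsCompl (LinearMap.ker P) (LinearMap.ker (P + lam • LinearMap.id)) ∧
    (∀ a b : A, a ∈ LinearMap.ker P → b ∈ LinearMap.ker P →
      a * b ∈ LinearMap.ker P) ∧
    (∀ a b : A, a ∈ LinearMap.ker (P + lam • LinearMap.id) →
      b ∈ LinearMap.ker (P + lam • LinearMap.id) →
      a * b ∈ LinearMap.ker (P + lam • LinearMap.id)) ∧
    (∀ a ∈ LinearMap.ker P, P a = 0) ∧
    (∀ a ∈ LinearMap.ker (P + lam • LinearMap.id), P a = -lam • a) := by
  obtain ⟨c, hc⟩ := h1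
  have hPP : ∀ v : A, P (P v) = -lam • P v := by
    intro v
    have h := hRB 1 v
    rw [hc] at h
    simp only [smul_mul_assoc, one_mul, map_add, map_smul] at h
    rw [neg_smul, eq_neg_iff_add_eq_zero]
    rwa [add_assoc, left_eq_add] at h
  have hmem : ∀ a : A, a ∈ LinearMap.ker (P + lam • LinearMap.id) ↔ P a = -lam • a := by
    intro a
    simp [LinearMap.mem_ker, neg_smul, eq_neg_iff_add_eq_zero]
  refine ⟨?_, ?_, ?_, ?_, fun a ha => ha, fun a ha => (hmem a).1 ha⟩
  · have h := hPP 1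
    rw [hc, map_smul, hc, smul_comm (-lam) c] at h
    by_cases h0 : c = 0
    · left
      rw [hc, h0, zero_smul]
    · right
      rw [hc]
      exact smul_right_injective A h0 h
  · rw [isCompl_iff]
    constructor
    · rw [Submodule.disjoint_def]
      intro x hx hx'
      rw [hmem, LinearMap.mem_ker.1 hx] at hx'
      exact (smul_eq_zero.1 hx'.symm).resolve_left (neg_ne_zero.2 hlam)
    · rw [codisjoint_iff, Submodule.eq_top_iff']
      intro x
      refine Submodule.mem_sup.2 ⟨lam⁻¹ • (P x + lam • x), ?_, (-lam⁻¹) • P x, ?_, ?_⟩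
      · rw [LinearMap.mem_ker, map_smul, map_add, map_smul, hPP, neg_smul, neg_add_cancel,
          smul_zero]
      · rw [hmem, map_smul, hPP, smul_comm]
      · rw [smul_add, inv_smul_smul₀ hlam, neg_smul]
        abel
  · intro a b ha hb
    rw [LinearMap.mem_ker] at *
    have h := hRB a b
    simp only [ha, hb, zero_mul, mul_zero, zero_add, map_smul] at h
    exact (smul_eq_zero.1 h.symm).resolve_left hlam
  · intro a b ha hb
    rw [hmem] at *
    have h := hRB a b
    -- two of the three terms under `P` combine to leave `P (-lam • (a * b))` on the right
    have e : P a * b + a * P b + lam • (a * b) = -lam • (a * b) := by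
      rw [ha, hb, smul_mul_assoc, mul_smul_comm, neg_smul]
      abel
    rw [e, map_smul, ha, hb, smul_mul_assoc, mul_smul_comm] at h
    exact (smul_right_injective A (neg_ne_zero.2 hlam) h).symm
end

section
/- Let A be a unital associative algebra over a field k of characteristic zero and P a Rota–Baxter operator of weight 0 on A. If, for some element x ∈ A, P(x) is a scalar multiple of 1, then P(x) = 0. -/
/- STATEMENT 14.  (Lemma 3b of the paper.)
Let `P` be a Rota–Baxter operator of weight 0 on a unital associative algebra `A` over a
field `K` of characteristic zero.  If `P x` is a scalar multiple of `1` for some `x ∈ A`,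
then `P x = 0`. -/
theorem RB_weight_zero_scalar_value_eq_zero
    {K : Type*} [Field K] [CharZero K]
    {A : Type*} [Ring A] [Algebra K A]
    (P : A →ₗ[K] A)
    (hRB : ∀ u v : A, P u * P v = P (P u * v + u * P v)) :
    ∀ (x : A) (c : K), P x = c • (1 : A) → P x = 0 := by
  intro x c hx
  -- With `u = v = x` the identity reads `c² • 1 = P (2c • x) = 2c² • 1`, so `c • P x = 0`.
  have h := hRB x x
  have hc : c • P x = 0 := by
    have hsq : P x * P x = c • P x := by
      nth_rewrite 1 [hx]
      rw [smul_mul_assoc, one_mul]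
    have hdouble : P (P x * x + x * P x) = c • P x + c • P x := by
      have harg : P x * x + x * P x = c • x + c • x := by
        rw [hx, smul_mul_assoc, mul_smul_comm, one_mul, mul_one]
      rw [harg, map_add, map_smul]
    rw [hsq, hdouble] at h
    exact left_eq_add.mp h
  rcases smul_eq_zero.mp hc with h0 | h0
  · rw [hx, h0, zero_smul]
  · exact h0
end

section
/- Let R be a nonzero monomial Rota–Baxter operator of weight 0 on k₀[x], and let m = gcd{t ≥ 1 : x^t ∈ Im(R)} (the image of R contains at least one monomial, so m is well defined). Let b be an integer with 0 < b ≤ m. If x^{ma+b} ∈ ker(R) for some integer a ≥ 0, then x^{mc+b} ∈ ker(R) for all integers c ≥ 0. -/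
/-!
The exponents of monomials in `ker R` are closed under adding any `t` with `X ^ t ∈ Im R`: if
`R u = X ^ t` and `R (X ^ n) = 0`, the Rota–Baxter identity for `u` and `X ^ n` reads
`0 = R (X ^ (t + n))`. The additive monoid generated by the exponents `t` contains all large
multiples of their gcd `m`, so one kernel exponent congruent to `b` modulo `m` forces every
sufficiently large exponent in that class into the kernel (`ker_add_closure`).

On the other hand, if `R (X ^ n) = α X ^ t` with `α ≠ 0`, then `X ^ (n + k t) ∉ ker R` for every
`k` (`iterate_nonzero`), and `m ∣ t`. For `n` in the class of `b` this gives arbitrarily large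
exponents in the class outside the kernel, a contradiction.
-/

open Polynomial

/-- Exponents of monomials in `ker R` are stable under adding sums of exponents of monomials in
the image of `R`. -/
lemma ker_add_closure {K : Type*} [Field K] (R : Polynomial K →ₗ[K] Polynomial K)
    (hRB : ∀ u v : Polynomial K, u.coeff 0 = 0 → v.coeff 0 = 0 →
      R u * R v = R (R u * v + u * R v))
    {e : ℕ} (he : e ∈ AddSubmonoid.closure
      {t : ℕ | 1 ≤ t ∧ ∃ u : Polynomial K, u.coeff 0 = 0 ∧ R u = X ^ t}) :
    ∀ n : ℕ, 1 ≤ n → R (X ^ n) = 0 → R (X ^ (n + e)) = 0 := by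
  induction he using AddSubmonoid.closure_induction with
  | mem t ht =>
    intro n hn h0
    obtain ⟨_, u, hu, hut⟩ := ht
    have h := hRB u (X ^ n) hu (by simp [coeff_X_pow]; omega)
    rw [h0, hut, mul_zero, mul_zero, add_zero, ← pow_add, add_comm t n] at h
    exact h.symm
  | zero => intro n _ h0; simpa using h0
  | add x y _ _ hx hy =>
    intro n hn h0
    rw [← add_assoc]
    exact hy _ (by omega) (hx n hn h0)

/-- Applying the Rota–Baxter identity to `X ^ n` and `X ^ (n + k t)` makes both terms on the right
multiples of `R (X ^ (n + (k + 1) t))`, while the left side is nonzero. -/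
lemma iterate_nonzero {K : Type*} [Field K] (R : Polynomial K →ₗ[K] Polynomial K)
    (hRB : ∀ u v : Polynomial K, u.coeff 0 = 0 → v.coeff 0 = 0 →
      R u * R v = R (R u * v + u * R v))
    {n t : ℕ} (hn : 1 ≤ n) {α : K} (hα : α ≠ 0) (h : R (X ^ n) = α • X ^ t) (k : ℕ) :
    ∃ β : K, β ≠ 0 ∧ R (X ^ (n + k * t)) = β • X ^ ((k + 1) * t) := by
  induction k with
  | zero => exact ⟨α, hα, by simpa using h⟩
  | succ k ih =>
    obtain ⟨β, hβ, hk⟩ := ih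
    have e := hRB (X ^ n) (X ^ (n + k * t)) (by simp [coeff_X_pow]; omega)
      (by simp [coeff_X_pow]; omega)
    have e1 : (α • X ^ t * X ^ (n + k * t) + X ^ n * β • X ^ ((k + 1) * t) : Polynomial K)
        = (α + β) • X ^ (n + (k + 1) * t) := by
      simp only [smul_eq_C_mul, map_add]; ring
    have e2 : (α • X ^ t * β • X ^ ((k + 1) * t) : Polynomial K)
        = (α * β) • X ^ ((k + 1 + 1) * t) := by
      simp only [smul_eq_C_mul, map_mul]; ring
    rw [h, hk, e1, e2, map_smul] at e
    have hs : α + β ≠ 0 := by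
      intro hs
      rw [hs, zero_smul] at e
      exact smul_ne_zero (mul_ne_zero hα hβ) (pow_ne_zero _ X_ne_zero) e
    refine ⟨(α + β)⁻¹ * (α * β), mul_ne_zero (inv_ne_zero hs) (mul_ne_zero hα hβ), ?_⟩
    rw [mul_smul, e, smul_smul, inv_mul_cancel₀ hs, one_smul]

/- STATEMENT 15.  (Lemma 4 of the paper.)
`k₀[x]` (polynomials over `K` without constant term, char `K` = 0) is encoded as the
subspace `{p : K[X] | p.coeff 0 = 0}` of `Polynomial K`; `R` is a nonzero monomial
Rota–Baxter operator of weight 0 on it.  `m` is the gcd of the set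
`S = {t ≥ 1 | x^t ∈ Im R}` (characterized by: `m` divides every element of `S`, and every
common divisor of `S` divides `m`; `S` is nonempty, so this determines `m`).
If `x^{ma+b} ∈ ker R` for some `a ≥ 0` (with `0 < b ≤ m`), then `x^{mc+b} ∈ ker R` for
all `c ≥ 0`. -/
theorem monomial_RB_weight_zero_kernel_lemma
    {K : Type*} [Field K] [CharZero K]
    (R : Polynomial K →ₗ[K] Polynomial K)
    (hmap : ∀ p : Polynomial K, p.coeff 0 = 0 → (R p).coeff 0 = 0)
    (hRB : ∀ u v : Polynomial K, u.coeff 0 = 0 → v.coeff 0 = 0 →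
      R u * R v = R (R u * v + u * R v))
    (hmono : ∀ n : ℕ, 1 ≤ n → ∃ (α : K) (t : ℕ), 1 ≤ t ∧ R (X ^ n) = α • X ^ t)
    (hne : ∃ p : Polynomial K, p.coeff 0 = 0 ∧ R p ≠ 0)
    (m : ℕ)
    (hmdvd : ∀ t : ℕ, (1 ≤ t ∧ ∃ u : Polynomial K, u.coeff 0 = 0 ∧ R u = X ^ t) → m ∣ t)
    (hmgcd : ∀ d : ℕ,
      (∀ t : ℕ, (1 ≤ t ∧ ∃ u : Polynomial K, u.coeff 0 = 0 ∧ R u = X ^ t) → d ∣ t) → d ∣ m)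
    (b : ℕ) (hb1 : 0 < b) (hbm : b ≤ m)
    (a : ℕ) (hker : R (X ^ (m * a + b)) = 0) :
    ∀ c : ℕ, R (X ^ (m * c + b)) = 0 := by
  intro c
  by_contra hc
  obtain ⟨α, t, ht, h⟩ := hmono (m * c + b) (by omega)
  have hα : α ≠ 0 := by
    rintro rfl
    exact hc (by rw [h, zero_smul])
  obtain ⟨s, rfl⟩ : m ∣ t := by
    refine hmdvd t ⟨ht, α⁻¹ • X ^ (m * c + b), ?_, ?_⟩
    · simp [coeff_X_pow]; omega
    · rw [map_smul, h, smul_smul, inv_mul_cancel₀ hα, one_smul]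
  have hm : 1 ≤ m := by omega
  have hs : 1 ≤ s := Nat.pos_of_ne_zero (by rintro rfl; simp at ht)
  obtain ⟨N, hN⟩ := Nat.exists_mem_closure_of_ge
    {t : ℕ | 1 ≤ t ∧ ∃ u : Polynomial K, u.coeff 0 = 0 ∧ R u = X ^ t}
  have hg : Nat.setGcd {t : ℕ | 1 ≤ t ∧ ∃ u : Polynomial K, u.coeff 0 = 0 ∧ R u = X ^ t} ∣ m :=
    hmgcd _ fun t ht => Nat.setGcd_dvd_of_mem ht
  -- `k = a + N` makes `(m * c + b) + k * t` exceed `m * a + b` by a multiple of `m` that is `≥ N`.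
  obtain ⟨β, hβ, hk⟩ := iterate_nonzero R hRB (by omega) hα h (a + N)
  obtain ⟨d, hd⟩ : ∃ d, c + (a + N) * s = a + (N + d) :=
    ⟨c + (a + N) * s - (a + N), by
      have := Nat.le_mul_of_pos_right (a + N) hs
      omega⟩
  have hz := ker_add_closure R hRB
    (hN (m * (N + d)) (by nlinarith) (hg.mul_right _)) (m * a + b) (by omega) hker
  have hidx : m * c + b + (a + N) * (m * s) = m * a + b + m * (N + d) := by
    linear_combination m * hd
  rw [hidx, hz] at hk
  exact smul_ne_zero hβ (pow_ne_zero _ X_ne_zero) hk.symm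
end

section
/- Let R be a nonzero monomial Rota–Baxter operator of weight 0 on k₀[x], and let m = gcd{t ≥ 1 : x^t ∈ Im(R)} (the image of R contains at least one monomial, so m is well defined). Let b be an integer with 0 < b ≤ m and suppose R(x^b) = α_0 x^{m p_b} for some nonzero α_0 ∈ k and some integer p_b ≥ 1. Then for every integer a ≥ 0 there exists a nonzero α_a ∈ k with R(x^{ma+b}) = α_a x^{m(a + p_b)}. -/
open Polynomial

/-!
Write `N` for the set of `n ≥ 1` with `R (X ^ n) ≠ 0`, and `t n` for the exponent of `R (X ^ n)` when
`n ∈ N`; thus `S = t(N)` is the set of exponents of monomials in the image. The Rota–Baxter identity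
on `X ^ n`, `X ^ l` is used in three ways.

* If `n ∈ N` and `t = t n`, induction on `j` gives `R (X ^ (n + j t)) = c / (j + 1) • X ^ ((j + 1) t)`
  with `c` the coefficient of `R (X ^ n)`; so `n + j t ∈ N` for all `j` (`IsRBMono.self_shift`).
* If `n ∉ N` and `s ∈ S` then `n + s ∉ N` (`IsRBMono.zero_shift`).
* If `n`, `l`, `n + t l` and `l + t n` all lie in `N`, comparing monomials shows
  `t (n + t l) = t n + t l`.

The first two facts force `n + s ∈ N` for all `n ∈ N`, `s ∈ S`: otherwise `n + s j ∉ N` for all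
`j ≥ 1`, contradicting `n + s (t n) ∈ N`. So `t (n + s) = t n + s` (`IsRBMono.shift`), and `S` is
closed under addition. Hence `S - S` is a subgroup of `ℤ`, and it contains the gcd: `m + B = A` with
`A, B ∈ S`. Now `n ∈ N` gives `n + m + B = n + A ∈ N`, hence `n + m ∈ N`, and
`t (n + m) + B = t n + A`, i.e. `t (n + m) = t n + m`. Iterating from `n = b` gives the claim.
-/

/-- `R (X ^ n)` is a nonzero multiple of `X ^ s`. -/
def ImageExp {K : Type*} [Field K] (R : Polynomial K →ₗ[K] Polynomial K) (n s : ℕ) : Prop :=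
  ∃ c : K, c ≠ 0 ∧ R (X ^ n) = c • X ^ s

/-- `R` is a monomial Rota–Baxter operator of weight `0`, recorded on monomials of positive degree
only. -/
structure IsRBMono {K : Type*} [Field K] (R : Polynomial K →ₗ[K] Polynomial K) : Prop where
  rb : ∀ n l : ℕ, 1 ≤ n → 1 ≤ l →
    R (X ^ n) * R (X ^ l) = R (R (X ^ n) * X ^ l + X ^ n * R (X ^ l))
  mono : ∀ n : ℕ, 1 ≤ n → R (X ^ n) = 0 ∨ ∃ s, 1 ≤ s ∧ ImageExp R n s

section

variable {K : Type*} [Field K] {R : Polynomial K →ₗ[K] Polynomial K}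

lemma smul_X_pow_inj {c d : K} (hc : c ≠ 0) {s t : ℕ}
    (h : c • (X : K[X]) ^ s = d • X ^ t) : s = t := by
  by_contra hst
  have := congrArg (fun q => coeff q s) h
  simp [coeff_X_pow, hst, hc] at this

lemma ImageExp.unique {n s t : ℕ} (h : ImageExp R n s) (hh : ImageExp R n t) : s = t := by
  obtain ⟨c, hc, h⟩ := h
  obtain ⟨d, -, hh⟩ := hh
  exact smul_X_pow_inj hc (h.symm.trans hh)

lemma ImageExp.ne_zero {n s : ℕ} (h : ImageExp R n s) : R (X ^ n) ≠ 0 := by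
  obtain ⟨c, hc, h⟩ := h
  rw [h]
  exact smul_ne_zero hc (pow_ne_zero _ X_ne_zero)

/-- The Rota–Baxter identity on two monomials with explicitly given images. -/
lemma IsRBMono.rb' (hR : IsRBMono R) {n l s t : ℕ} (hn : 1 ≤ n) (hl : 1 ≤ l) {c d : K}
    (h : R (X ^ n) = c • X ^ s) (hh : R (X ^ l) = d • X ^ t) :
    (c * d) • (X : K[X]) ^ (s + t) = c • R (X ^ (l + s)) + d • R (X ^ (n + t)) := by
  have := hR.rb n l hn hl
  rw [h, hh, map_add, smul_mul_smul_comm, smul_mul_assoc, mul_smul_comm, map_smul, map_smul,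
    ← pow_add, ← pow_add, ← pow_add] at this
  rw [this, add_comm s l]

lemma IsRBMono.zero_shift (hR : IsRBMono R) {n l s : ℕ} (hn : 1 ≤ n) (hl : 1 ≤ l)
    (h : R (X ^ n) = 0) (hh : ImageExp R l s) : R (X ^ (n + s)) = 0 := by
  obtain ⟨d, hd, hh⟩ := hh
  have := hR.rb' (s := 0) (c := 0) hn hl (by simpa using h) hh
  simpa [hd] using this.symm

lemma IsRBMono.zero_shift_mul (hR : IsRBMono R) {n l s : ℕ} (hn : 1 ≤ n) (hl : 1 ≤ l)
    (h : R (X ^ n) = 0) (hh : ImageExp R l s) (j : ℕ) : R (X ^ (n + s * j)) = 0 := by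
  induction j with
  | zero => simpa using h
  | succ j ih =>
    have := hR.zero_shift (by omega) hl ih hh
    rwa [add_assoc, ← Nat.mul_succ] at this

lemma IsRBMono.self_shift [CharZero K] (hR : IsRBMono R) {n s : ℕ} (hn : 1 ≤ n)
    {c : K} (hc : c ≠ 0) (h : R (X ^ n) = c • X ^ s) (j : ℕ) :
    R (X ^ (n + s * j)) = (c / (j + 1)) • X ^ (s * (j + 1)) := by
  induction j with
  | zero => simpa using h
  | succ j ih =>
    have h1 := hR.rb' hn (by omega : 1 ≤ n + s * j) h ih
    have e1 : n + s * j + s = n + s * (j + 1) := by ring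
    have e2 : s + s * (j + 1) = s * (j + 1 + 1) := by ring
    rw [e1, e2, ← add_smul] at h1
    have hj : (j : K) + 1 ≠ 0 := by exact_mod_cast Nat.succ_ne_zero j
    have hj2 : (j : K) + 1 + 1 ≠ 0 := by exact_mod_cast Nat.succ_ne_zero (j + 1)
    have hcoef : c + c / ((j : K) + 1) ≠ 0 := by
      have : c + c / ((j : K) + 1) = c * (j + 1 + 1) / (j + 1) := by field_simp
      rw [this]
      exact div_ne_zero (mul_ne_zero hc hj2) hj
    apply smul_right_injective _ hcoef
    simp only
    rw [← h1, smul_smul]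
    congr 1
    push_cast
    field_simp

/-- `N + S ⊆ N`. -/
lemma IsRBMono.shift_ne_zero [CharZero K] (hR : IsRBMono R) {n l s t : ℕ} (hn : 1 ≤ n)
    (hl : 1 ≤ l) (hs : 1 ≤ s) (h : ImageExp R n s) (hh : ImageExp R l t) :
    R (X ^ (n + t)) ≠ 0 := by
  intro h0
  -- `n + t + t (s - 1) = n + s t` lies both outside and inside the support
  have h1 := hR.zero_shift_mul (by omega) hl h0 hh (s - 1)
  obtain ⟨c, hc, h⟩ := h
  have h2 := hR.self_shift hn hc h t
  have e : n + t + t * (s - 1) = n + s * t := by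
    obtain ⟨s, rfl⟩ := Nat.exists_eq_add_of_le' hs
    simp only [Nat.add_sub_cancel]
    ring
  rw [e, h2] at h1
  have ht : (t : K) + 1 ≠ 0 := by exact_mod_cast Nat.succ_ne_zero t
  exact smul_ne_zero (div_ne_zero hc ht) (pow_ne_zero _ X_ne_zero) h1

/-- If a nonzero multiple of `X ^ e` is the sum of a nonzero multiple of `X ^ f` and any multiple
of `X ^ g`, then `f = e`. -/
lemma exponent_eq {a c d : K} (ha : a ≠ 0) (hc : c ≠ 0) {e f g : ℕ}
    (h : a • (X : K[X]) ^ e = c • X ^ f + d • X ^ g) : f = e := by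
  by_contra hfe
  have h1 := congrArg (fun q => coeff q f) h
  have h2 := congrArg (fun q => coeff q e) h
  simp only [coeff_smul, coeff_add, coeff_X_pow, smul_eq_mul] at h1 h2
  by_cases hfg : f = g
  · subst hfg
    simp [Ne.symm hfe, ha] at h2
  · exact hc (by simpa [hfg, hfe] using h1.symm)

lemma IsRBMono.shift [CharZero K] (hR : IsRBMono R) {n l s t : ℕ} (hn : 1 ≤ n)
    (hl : 1 ≤ l) (hs : 1 ≤ s) (ht : 1 ≤ t) (h : ImageExp R n s) (hh : ImageExp R l t) :
    ImageExp R (n + t) (s + t) := by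
  have h1 := hR.shift_ne_zero hn hl hs h hh
  have h2 := hR.shift_ne_zero hl hn ht hh h
  obtain ⟨u, -, c1, hc1, hu⟩ := (hR.mono (n + t) (by omega)).resolve_left h1
  obtain ⟨v, -, c2, hc2, hv⟩ := (hR.mono (l + s) (by omega)).resolve_left h2
  obtain ⟨c, hc, h⟩ := h
  obtain ⟨d, hd, hh⟩ := hh
  have h3 := hR.rb' hn hl h hh
  rw [hu, hv, smul_smul, smul_smul] at h3
  have h4 := exponent_eq (mul_ne_zero hc hd) (mul_ne_zero hd hc1)
    (h3.trans (add_comm _ _))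
  exact ⟨c1, hc1, by rw [hu, h4]⟩

/-- The set `S` of exponents `s ≥ 1` such that `R` maps some `X ^ n`, `n ≥ 1`, to a nonzero multiple of
`X ^ s`. -/
def expSet (R : Polynomial K →ₗ[K] Polynomial K) : Set ℕ :=
  {s | 1 ≤ s ∧ ∃ n, 1 ≤ n ∧ ImageExp R n s}

lemma IsRBMono.expSet_add [CharZero K] (hR : IsRBMono R) {s t : ℕ} (hs : s ∈ expSet R)
    (ht : t ∈ expSet R) : s + t ∈ expSet R := by
  obtain ⟨hs, n, hn, h⟩ := hs
  obtain ⟨ht, l, hl, hh⟩ := ht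
  exact ⟨by omega, n + t, by omega, hR.shift hn hl hs ht h hh⟩

/-- The gcd of a nonempty additively closed set of naturals is a difference of two of its elements; only
the divisibility of `m` by every common divisor is needed. -/
lemma exists_sub_of_gcd {S : Set ℕ} (hS : S.Nonempty)
    (hadd : ∀ s ∈ S, ∀ t ∈ S, s + t ∈ S) {m : ℕ}
    (hm : ∀ d : ℕ, (∀ s ∈ S, d ∣ s) → d ∣ m) : ∃ A ∈ S, ∃ B ∈ S, m + B = A := by
  obtain ⟨s₀, hs₀⟩ := hS
  let H : AddSubgroup ℤ :=
    { carrier := {z | ∃ A ∈ S, ∃ B ∈ S, z + (B : ℤ) = A}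
      zero_mem' := ⟨s₀, hs₀, s₀, hs₀, by simp⟩
      add_mem' := by
        rintro x y ⟨A, hA, B, hB, h⟩ ⟨A', hA', B', hB', hh⟩
        exact ⟨A + A', hadd _ hA _ hA', B + B', hadd _ hB _ hB', by push_cast; omega⟩
      neg_mem' := by
        rintro x ⟨A, hA, B, hB, h⟩
        exact ⟨B, hB, A, hA, by omega⟩ }
  obtain ⟨g, hg⟩ := Int.subgroup_cyclic H
  have hmem : ∀ z : ℤ, z ∈ H ↔ g ∣ z := by
    intro z
    rw [hg, AddSubgroup.mem_closure_singleton]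
    constructor
    · rintro ⟨j, rfl⟩
      exact ⟨j, by simp [mul_comm]⟩
    · rintro ⟨j, rfl⟩
      exact ⟨j, by simp [mul_comm]⟩
  have hgm : g.natAbs ∣ m := by
    apply hm
    intro s hs
    have : (s : ℤ) ∈ H := ⟨s + s, hadd _ hs _ hs, s, hs, by push_cast; ring⟩
    exact Int.natCast_dvd_natCast.1 (Int.natAbs_dvd.2 ((hmem _).1 this))
  obtain ⟨A, hA, B, hB, h⟩ := (hmem m).2 (Int.natAbs_dvd.1 (Int.natCast_dvd_natCast.2 hgm))
  exact ⟨A, hA, B, hB, by omega⟩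

/-- Every monomial in the image of `R` is already hit by a monomial, up to a nonzero scalar. -/
lemma IsRBMono.mem_expSet (hR : IsRBMono R) {t : ℕ} (ht : 1 ≤ t) {u : K[X]}
    (hu : u.coeff 0 = 0) (h : R u = X ^ t) : t ∈ expSet R := by
  rw [u.as_sum_support, map_sum] at h
  have h1 := congrArg (fun q => coeff q t) h
  simp only [finsetSum_coeff, coeff_X_pow, if_true] at h1
  obtain ⟨i, hi, hne⟩ := Finset.exists_ne_zero_of_sum_ne_zero (h1.trans_ne one_ne_zero)
  have hi1 : 1 ≤ i := by
    rcases Nat.eq_zero_or_pos i with rfl | h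
    · exact absurd hu (mem_support_iff.1 hi)
    · exact h
  rw [← smul_X_eq_monomial, map_smul] at hne
  rcases hR.mono i hi1 with h0 | ⟨s, -, hs⟩
  · simp [h0] at hne
  · refine ⟨ht, i, hi1, ?_⟩
    have hst : t = s := by
      obtain ⟨c, hc, hs⟩ := hs
      by_contra hne'
      simp [hs, coeff_X_pow, hne'] at hne
    exact hst ▸ hs

/-- Translation of the exponent by a difference `m = A - B` of elements of `S`. -/
lemma IsRBMono.shift_sub [CharZero K] (hR : IsRBMono R) {n s m A B : ℕ} (hn : 1 ≤ n) (hs : 1 ≤ s)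
    (h : ImageExp R n s) (hA : A ∈ expSet R) (hB : B ∈ expSet R) (hm : m + B = A) :
    ImageExp R (n + m) (s + m) := by
  obtain ⟨hA1, a, ha, hA⟩ := hA
  obtain ⟨hB1, b, hb, hB⟩ := hB
  have h1 := hR.shift hn ha hs hA1 h hA
  rw [← hm, ← add_assoc, ← add_assoc] at h1
  rcases hR.mono (n + m) (by omega) with h0 | ⟨s', hs', hh⟩
  · exact absurd (hR.zero_shift (by omega) hb h0 hB) h1.ne_zero
  · have h2 := hR.shift (by omega) hb hs' hB1 hh hB
    have : s' = s + m := by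
      have := h1.unique h2
      omega
    exact this ▸ hh

end

/- STATEMENT 16.  (Lemma 5 of the paper.)
`k₀[x]` (polynomials over `K` without constant term, char `K` = 0) is encoded as the
subspace `{p : K[X] | p.coeff 0 = 0}` of `Polynomial K`; `R` is a nonzero monomial
Rota–Baxter operator of weight 0 on it, and `m` is the gcd of
`S = {t ≥ 1 | x^t ∈ Im R}` (characterized via divisibility; `S ≠ ∅`, so `m` is
determined).  If `R x^b = α₀ x^{m p}` with `α₀ ≠ 0`, `p ≥ 1` and `0 < b ≤ m`, then for
every `a ≥ 0` there is a nonzero `αₐ ∈ K` with `R x^{ma+b} = αₐ x^{m(a+p)}`. -/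
theorem monomial_RB_weight_zero_image_lemma
    {K : Type*} [Field K] [CharZero K]
    (R : Polynomial K →ₗ[K] Polynomial K)
    (hmap : ∀ p : Polynomial K, p.coeff 0 = 0 → (R p).coeff 0 = 0)
    (hRB : ∀ u v : Polynomial K, u.coeff 0 = 0 → v.coeff 0 = 0 →
      R u * R v = R (R u * v + u * R v))
    (hmono : ∀ n : ℕ, 1 ≤ n → ∃ (α : K) (t : ℕ), 1 ≤ t ∧ R (X ^ n) = α • X ^ t)
    (hne : ∃ p : Polynomial K, p.coeff 0 = 0 ∧ R p ≠ 0)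
    (m : ℕ)
    (hmdvd : ∀ t : ℕ, (1 ≤ t ∧ ∃ u : Polynomial K, u.coeff 0 = 0 ∧ R u = X ^ t) → m ∣ t)
    (hmgcd : ∀ d : ℕ,
      (∀ t : ℕ, (1 ≤ t ∧ ∃ u : Polynomial K, u.coeff 0 = 0 ∧ R u = X ^ t) → d ∣ t) → d ∣ m)
    (b : ℕ) (hb1 : 0 < b) (hbm : b ≤ m)
    (α₀ : K) (hα₀ : α₀ ≠ 0) (p : ℕ) (hp : 1 ≤ p)
    (hb : R (X ^ b) = α₀ • X ^ (m * p)) :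
    ∀ a : ℕ, ∃ αa : K, αa ≠ 0 ∧ R (X ^ (m * a + b)) = αa • X ^ (m * (a + p)) := by
  have hX : ∀ n : ℕ, 1 ≤ n → (X ^ n : K[X]).coeff 0 = 0 := by
    intro n hn
    simp [coeff_X_pow]
    omega
  have hR : IsRBMono R :=
    { rb := fun n l hn hl => hRB _ _ (hX n hn) (hX l hl)
      mono := by
        intro n hn
        obtain ⟨c, t, ht, h⟩ := hmono n hn
        by_cases hc : c = 0
        · exact Or.inl (by simp [h, hc])
        · exact Or.inr ⟨t, ht, c, hc, h⟩ }
  have hm1 : 1 ≤ m * p := Nat.mul_pos (by omega) hp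
  obtain ⟨A, hA, B, hB, hAB⟩ := exists_sub_of_gcd (S := expSet R) (m := m)
    ⟨m * p, hm1, b, hb1, α₀, hα₀, hb⟩ (fun s hs t ht => hR.expSet_add hs ht)
    (fun d hd => hmgcd d fun t ⟨ht, u, hu, h⟩ => hd t (hR.mem_expSet ht hu h))
  intro a
  change ImageExp R _ _
  induction a with
  | zero => exact ⟨α₀, hα₀, by simpa using hb⟩
  | succ a ih =>
    have := hR.shift_sub (by omega) (Nat.mul_pos (by omega) (by omega)) ih hA hB hAB
    convert this using 1 <;> ring
end

section
/- Let α_1, …, α_n ∈ k be nonzero scalars such that for all integers i_1, …, i_n ≥ 0 with i_1 + … + i_n > 0 the sum i_1/α_1 + … + i_n/α_n is nonzero. Then the linear operator R on k₀[x_1, …, x_n] defined on monomials by R(x_1^{i_1}⋯x_n^{i_n}) = (x_1^{i_1}⋯x_n^{i_n}) / (i_1/α_1 + … + i_n/α_n) is an injective monomial Rota–Baxter operator of weight 0 on k₀[x_1, …, x_n]. -/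
/-!
Write `w i = ∑ j, i j / α j`. The derivation `D` with `D (X j) = X j / α j` multiplies the monomial
`x ^ i` by `w i`, so on polynomials without constant term `R` and `D` are mutually inverse.
Injectivity of `R` follows, and the Rota–Baxter identity of weight zero is the Leibniz rule:
`R u * R v = R (D (R u * R v)) = R (R u * v + u * R v)`.
-/

open MvPolynomial

/-- Linear induction over the polynomials without constant term: they are spanned by the
nonconstant monomials. -/
theorem constantCoeff_zero_induction {K : Type*} [Field K] {n : ℕ}
    {P : MvPolynomial (Fin n) K → Prop} (zero : P 0)
    (hadd : ∀ p q, P p → P q → P (p + q)) (smul : ∀ (c : K) p, P p → P (c • p))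
    (mono : ∀ i : Fin n →₀ ℕ, i ≠ 0 → P (monomial i 1))
    (p : MvPolynomial (Fin n) K) (hp : constantCoeff p = 0) : P p := by
  rw [p.as_sum]
  refine Finset.sum_induction _ P hadd zero fun i hi => ?_
  have h : monomial i (coeff i p) = coeff i p • monomial i (1 : K) := by
    rw [smul_monomial, smul_eq_mul, mul_one]
  rw [h]
  refine smul _ _ (mono i ?_)
  rintro rfl
  exact mem_support_iff.mp hi hp

/-- The weighted Euler derivation `∑ j, (α j)⁻¹ • X j * ∂/∂X j`. -/
noncomputable def eulerDerivation {K : Type*} [Field K] {n : ℕ} (α : Fin n → K) :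
    Derivation K (MvPolynomial (Fin n) K) (MvPolynomial (Fin n) K) :=
  mkDerivation K fun j => (α j)⁻¹ • X j

theorem eulerDerivation_monomial {K : Type*} [Field K] {n : ℕ} (α : Fin n → K)
    (i : Fin n →₀ ℕ) :
    eulerDerivation α (monomial i 1) = (∑ j, (i j : K) / α j) • monomial i (1 : K) := by
  rw [eulerDerivation, mkDerivation_monomial, one_smul, Finsupp.sum_fintype _ _ (by simp),
    Finset.sum_smul]
  refine Finset.sum_congr rfl fun j _ => ?_
  by_cases hj : i j = 0
  · simp [hj]
  · have hle : Finsupp.single j 1 ≤ i := by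
      simpa [Finsupp.single_le_iff] using Nat.one_le_iff_ne_zero.mpr hj
    rw [smul_eq_mul, mul_smul_comm, X, monomial_mul, tsub_add_cancel_of_le hle]
    simp [smul_monomial, div_eq_mul_inv, mul_comm]

/- STATEMENT 18.  (Example 5 of the paper.)
`k₀[x_1, …, x_n]` (polynomials without constant term, char `K` = 0) is encoded as the
subspace `{p | constantCoeff p = 0}` of `MvPolynomial (Fin n) K`.  Given nonzero scalars
`α_1, …, α_n` with all sums `i_1/α_1 + … + i_n/α_n` (for `i ≠ 0`) nonzero, the linear
operator `R` with `R (x_1^{i_1}⋯x_n^{i_n}) = (i_1/α_1 + … + i_n/α_n)⁻¹ • x_1^{i_1}⋯x_n^{i_n}`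
on these monomials is an injective monomial Rota–Baxter operator of weight 0 on
`k₀[x_1, …, x_n]`: it preserves the subspace, is injective on it, satisfies the weight-0
Rota–Baxter identity on it, and is monomial. -/
theorem example_injective_monomial_RB_weight_zero_on_k0X
    {K : Type*} [Field K] [CharZero K] (n : ℕ)
    (α : Fin n → K) (hα : ∀ j, α j ≠ 0)
    (hsum : ∀ i : Fin n →₀ ℕ, i ≠ 0 → (∑ j, (i j : K) / α j) ≠ 0)
    (R : MvPolynomial (Fin n) K →ₗ[K] MvPolynomial (Fin n) K)
    (hR : ∀ i : Fin n →₀ ℕ, i ≠ 0 →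
      R (monomial i (1 : K)) = (∑ j, (i j : K) / α j)⁻¹ • monomial i (1 : K)) :
    (∀ p : MvPolynomial (Fin n) K, constantCoeff p = 0 → constantCoeff (R p) = 0) ∧
    (∀ u : MvPolynomial (Fin n) K, constantCoeff u = 0 → R u = 0 → u = 0) ∧
    (∀ u v : MvPolynomial (Fin n) K, constantCoeff u = 0 → constantCoeff v = 0 →
      R u * R v = R (R u * v + u * R v)) ∧
    (∀ i : Fin n →₀ ℕ, i ≠ 0 → ∃ (c : K) (t : Fin n →₀ ℕ),
      t ≠ 0 ∧ R (monomial i (1 : K)) = c • monomial t (1 : K)) := by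
  have hcc : ∀ p : MvPolynomial (Fin n) K, constantCoeff p = 0 → constantCoeff (R p) = 0 := by
    refine constantCoeff_zero_induction (by simp) (fun p q hp hq => by simp [hp, hq])
      (fun c p hp => by simp [hp]) fun i hi => ?_
    rw [hR i hi]
    simp [constantCoeff_monomial, hi]
  have hDR : ∀ p : MvPolynomial (Fin n) K, constantCoeff p = 0 →
      eulerDerivation α (R p) = p := by
    refine constantCoeff_zero_induction (by simp) (fun p q hp hq => by simp [hp, hq])
      (fun c p hp => by simp [hp]) fun i hi => ?_
    rw [hR i hi, Derivation.map_smul, eulerDerivation_monomial, inv_smul_smul₀ (hsum i hi)]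
  have hRD : ∀ p : MvPolynomial (Fin n) K, constantCoeff p = 0 →
      R (eulerDerivation α p) = p := by
    refine constantCoeff_zero_induction (by simp) (fun p q hp hq => by simp [hp, hq])
      (fun c p hp => by simp [hp]) fun i hi => ?_
    rw [eulerDerivation_monomial, map_smul, hR i hi, smul_inv_smul₀ (hsum i hi)]
  refine ⟨hcc, fun u hu h => ?_, fun u v hu hv => ?_, fun i hi => ⟨_, i, hi, hR i hi⟩⟩
  · rw [← hDR u hu, h, map_zero]
  · have h := hRD (R u * R v) (by rw [map_mul, hcc u hu, zero_mul])
    rw [Derivation.leibniz, hDR u hu, hDR v hv, smul_eq_mul, smul_eq_mul, mul_comm (R v)] at h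
    exact h.symm
end
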